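/- For a dgLa L over C and a local Artinian C-algebra A with maximal ideal m_A, the simplicial set n ↦ MC(L ⊗ m_A ⊗ A^*(Δ_n)) is a Kan complex. -/

import Mathlib

/-!
STATEMENT 15: For a dgLa L over ℂ and a local Artinian ℂ-algebra A with maximal
ideal m_A, the simplicial set n ↦ MC(L ⊗ m_A ⊗ A^*(Δ_n)) is a Kan complex,
i.e. every horn of Maurer-Cartan elements can be filled.
-/

/-- A model of the polynomial de Rham algebra `A^*(Δ_n)` (see STATEMENT 4). -/
structure SimplexForms (n : ℕ) where
  A : Type
  [ringA : Ring A]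
  [algA : Algebra ℂ A]
  grading : ℕ → Submodule ℂ A
  [gradedA : GradedAlgebra grading]
  gcomm : ∀ (p q : ℕ) (a b : A), a ∈ grading p → b ∈ grading q →
    a * b = ((-1 : ℤ) ^ (p * q)) • (b * a)
  d : A →ₗ[ℂ] A
  d_mem : ∀ (q : ℕ) (a : A), a ∈ grading q → d a ∈ grading (q + 1)
  d_sq : ∀ a : A, d (d a) = 0
  leibniz : ∀ (p : ℕ) (a b : A), a ∈ grading p →
    d (a * b) = d a * b + ((-1 : ℤ) ^ p) • (a * d b)
  x : Fin (n + 1) → A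
  x_mem : ∀ i, x i ∈ grading 0
  sum_x : ∑ i, x i = 1
  sum_dx : ∑ i, d (x i) = 0

attribute [instance] SimplexForms.ringA SimplexForms.algA SimplexForms.gradedA

/-- `Ω` is the polynomial de Rham algebra `A^*(Δ_n)`: universal property. -/
def IsPolyDeRham {n : ℕ} (Ω : SimplexForms n) : Prop :=
  ∀ B : SimplexForms n, ∃! φ : Ω.A →ₐ[ℂ] B.A,
    (∀ a, φ (Ω.d a) = B.d (φ a)) ∧
    (∀ (p : ℕ) (a : Ω.A), a ∈ Ω.grading p → φ a ∈ B.grading p) ∧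
    (∀ i, φ (Ω.x i) = B.x i)

/-- The property of being the pullback morphism `a^*` induced by
`a : [n] → [m]`: a morphism of dgas (commuting with `d` and preserving the
grading) with `φ(x_j) = Σ_{i : a i = j} x_i`. -/
def PullbackProp {m n : ℕ} (Ωm : SimplexForms m) (Ωn : SimplexForms n)
    (a : Fin (n + 1) → Fin (m + 1)) (φ : Ωm.A →ₐ[ℂ] Ωn.A) : Prop :=
  (∀ y, φ (Ωm.d y) = Ωn.d (φ y)) ∧
  (∀ (p : ℕ) (y : Ωm.A), y ∈ Ωm.grading p → φ y ∈ Ωn.grading p) ∧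
  (∀ j : Fin (m + 1),
    φ (Ωm.x j) = ∑ i ∈ Finset.univ.filter (fun i => a i = j), Ωn.x i)


open TensorProduct

/-- the sign (-1)^n for n : ℤ. -/
def sgn (n : ℤ) : ℤ := ((-1 : ℤˣ) ^ n : ℤˣ)

/-- A (ℤ-graded) differential graded Lie algebra over ℂ. -/
structure GradedDGLA where
  L : Type
  [acg : AddCommGroup L]
  [mod : Module ℂ L]
  gr : ℤ → Submodule ℂ L
  br : L →ₗ[ℂ] L →ₗ[ℂ] L
  dL : L →ₗ[ℂ] L
  br_mem : ∀ (p q : ℤ) (v w : L), v ∈ gr p → w ∈ gr q → br v w ∈ gr (p + q)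
  d_mem : ∀ (p : ℤ) (v : L), v ∈ gr p → dL v ∈ gr (p + 1)
  d_sq : ∀ v : L, dL (dL v) = 0
  skew : ∀ (p q : ℤ) (v w : L), v ∈ gr p → w ∈ gr q →
    br v w = -(sgn (p * q) • br w v)
  jacobi : ∀ (p q : ℤ) (v w z : L), v ∈ gr p → w ∈ gr q →
    br v (br w z) = br (br v w) z + sgn (p * q) • br w (br v z)
  leib : ∀ (p : ℤ) (v w : L), v ∈ gr p →
    dL (br v w) = br (dL v) w + sgn p • br v (dL w)

attribute [instance] GradedDGLA.acg GradedDGLA.mod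

/-- The submodule of `L ⊗ A ⊗ A^*(Δ_k)` of elements of total degree 1 with
coefficients in the ideal `m ⊆ A`, i.e. `⊕_q L^{1-q} ⊗ m ⊗ A^q(Δ_k)`. -/
noncomputable def Deg1m (F : ∀ k, SimplexForms k) (L : GradedDGLA)
    (A : Type) [CommRing A] [Algebra ℂ A] (m : Submodule ℂ A) (k : ℕ) :
    Submodule ℂ ((L.L ⊗[ℂ] A) ⊗[ℂ] (F k).A) :=
  ⨆ q : ℕ, LinearMap.range
    (TensorProduct.map (TensorProduct.map (L.gr (1 - (q : ℤ))).subtype m.subtype)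
      ((F k).grading q).subtype)

/-- The Maurer–Cartan condition for `φ ∈ L¹(⊗ m_A ⊗ A^*(Δ_k))`, relative to
given total differential `D` and bracket `Br` on `L ⊗ A ⊗ A^*(Δ_k)`. -/
def IsMCsimp (F : ∀ k, SimplexForms k) (L : GradedDGLA)
    (A : Type) [CommRing A] [Algebra ℂ A] (m : Submodule ℂ A)
    (D : ∀ k, (L.L ⊗[ℂ] A) ⊗[ℂ] (F k).A →ₗ[ℂ] (L.L ⊗[ℂ] A) ⊗[ℂ] (F k).A)
    (Br : ∀ k, (L.L ⊗[ℂ] A) ⊗[ℂ] (F k).A →ₗ[ℂ]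
      (L.L ⊗[ℂ] A) ⊗[ℂ] (F k).A →ₗ[ℂ] (L.L ⊗[ℂ] A) ⊗[ℂ] (F k).A)
    (k : ℕ) (φ : (L.L ⊗[ℂ] A) ⊗[ℂ] (F k).A) : Prop :=
  φ ∈ Deg1m F L A m k ∧ D k φ + (1 / 2 : ℂ) • Br k φ φ = 0

/-!
As forms pull back along all affine maps of simplices, not only the monotone ones, the elements of
`L ⊗ m_A ⊗ A^*(Δ_•)` of degree 1 form a symmetric simplicial abelian group, in which a horn is
filled one face at a time: a wrong face `δ_i^* φ` is corrected by adding `r^* (ψ_i - δ_i^* φ)`,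
where `r` collapses the `i`-th vertex onto the vertex `k` opposite to the missing face.

The faces of the resulting `φ` are Maurer–Cartan, so its curvature `c = Dφ + ½[φ, φ]` lies in the
ideal of forms vanishing on the horn. The straight-line contraction of the simplex to the vertex `k`
preserves every face through `k`; hence fibre integration along it gives a homotopy operator `h`
contracting this ideal. By the Bianchi identity `Dc = -[φ, c]`, replacing `φ` by `φ - h c` moves the
curvature into the next power of `m_A` without changing the faces. As `m_A` is nilpotent, finitely
many such corrections make the curvature vanish.
-/

section SignInvolution

variable {R C C' : Type*} [CommRing R] [Ring C] [Algebra R C] [Ring C'] [Algebra R C']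
  (G : ℕ → Submodule R C) [GradedAlgebra G] (G' : ℕ → Submodule R C') [GradedAlgebra G']

/-- The sign involution of a graded algebra: multiplication by `(-1)^q` in degree `q`. -/
noncomputable def signInvol : C →ₐ[R] C :=
  (DirectSum.toAlgebra R (fun q => G q) (fun q => (-1 : ℤ) ^ q • (G q).subtype)
    (by simp) (fun a b => by
      simp only [LinearMap.smul_apply, Submodule.subtype_apply, SetLike.coe_gMul, pow_add,
        smul_mul_smul_comm])).comp (DirectSum.decomposeAlgEquiv G).toAlgHom

variable {G G'}

theorem signInvol_of_mem {q : ℕ} {a : C} (ha : a ∈ G q) :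
    signInvol G a = (-1 : ℤ) ^ q • a := by
  change DirectSum.toModule R ℕ C _ (DirectSum.decompose G a) = _
  rw [DirectSum.decompose_of_mem G ha]
  exact DirectSum.toModule_lof R q _

theorem signInvol_mem {q : ℕ} {a : C} (ha : a ∈ G q) : signInvol G a ∈ G q := by
  rw [signInvol_of_mem ha]
  exact zsmul_mem ha _

theorem signInvol_signInvol (a : C) : signInvol G (signInvol G a) = a := by
  induction a using DirectSum.Decomposition.inductionOn G with
  | zero => simp
  | @homogeneous q a =>
    rw [signInvol_of_mem a.2, map_zsmul, signInvol_of_mem a.2, smul_smul, ← mul_pow]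
    simp
  | add a b ha hb => simp only [map_add, ha, hb]

theorem signInvol_map (f : C →ₗ[R] C') (hf : ∀ q, ∀ a ∈ G q, f a ∈ G' q) (a : C) :
    signInvol G' (f a) = f (signInvol G a) := by
  induction a using DirectSum.Decomposition.inductionOn G with
  | zero => simp
  | @homogeneous q a => rw [signInvol_of_mem a.2, signInvol_of_mem (hf q a a.2), map_zsmul]
  | add a b ha hb => simp only [map_add, ha, hb]

end SignInvolution

section Decomposition

variable {R M N : Type*} [CommRing R] [AddCommGroup M] [Module R M] [AddCommGroup N] [Module R N]

open DirectSum

theorem decomposeLinearEquiv_of_mem (G : ℕ → Submodule R M) [Decomposition G] {q : ℕ} {a : M}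
    (ha : a ∈ G q) : decomposeLinearEquiv G a = lof R ℕ (fun q => G q) q ⟨a, ha⟩ :=
  decompose_of_mem G ha

/-- The decomposition of a product into the products of the components. -/
@[reducible]
noncomputable def prodDecomposition (G : ℕ → Submodule R M) (H : ℕ → Submodule R N)
    [Decomposition G] [Decomposition H] : Decomposition (fun q => (G q).prod (H q)) :=
  let ι₁ (q : ℕ) : G q →ₗ[R] (G q).prod (H q) :=
    (LinearMap.inl R M N ∘ₗ (G q).subtype).codRestrict _ fun a => ⟨a.2, zero_mem _⟩
  let ι₂ (q : ℕ) : H q →ₗ[R] (G q).prod (H q) :=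
    (LinearMap.inr R M N ∘ₗ (H q).subtype).codRestrict _ fun b => ⟨zero_mem _, b.2⟩
  have coe_ι₁ (q : ℕ) (a : G q) : (ι₁ q a : M × N) = (↑a, 0) := rfl
  have coe_ι₂ (q : ℕ) (b : H q) : (ι₂ q b : M × N) = (0, ↑b) := rfl
  .ofLinearMap _
    ((lmap ι₁ ∘ₗ (decomposeLinearEquiv G).toLinearMap).coprod
      (lmap ι₂ ∘ₗ (decomposeLinearEquiv H).toLinearMap))
    (LinearMap.prod_ext
      (decompose_lhom_ext G fun q => LinearMap.ext fun a => by
        simp [decomposeLinearEquiv_of_mem G a.2, lmap_lof, coe_ι₁])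
      (decompose_lhom_ext H fun q => LinearMap.ext fun b => by
        simp [decomposeLinearEquiv_of_mem H b.2, lmap_lof, coe_ι₂]))
    (linearMap_ext R fun q => LinearMap.ext fun ⟨⟨a, b⟩, ha, hb⟩ => by
      have hsum : ι₁ q ⟨a, ha⟩ + ι₂ q ⟨b, hb⟩ = ⟨(a, b), ha, hb⟩ := by
        ext <;> simp [coe_ι₁, coe_ι₂]
      simp [decomposeLinearEquiv_of_mem G ha, decomposeLinearEquiv_of_mem H hb, lmap_lof,
        ← map_add, hsum])

/-- The grading with all degrees raised by one. -/
def shift (G : ℕ → Submodule R M) : ℕ → Submodule R M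
  | 0 => ⊥
  | q + 1 => G q

/-- The decomposition for the grading with all degrees raised by one. -/
@[reducible]
noncomputable def shiftDecomposition (G : ℕ → Submodule R M) [Decomposition G] :
    Decomposition (shift G) :=
  let ι (q : ℕ) : G q →ₗ[R] shift G (q + 1) := (G q).subtype.codRestrict (shift G (q + 1)) (·.2)
  have coe_ι (q : ℕ) (a : G q) : (ι q a : M) = a := rfl
  .ofLinearMap _
    (toModule R ℕ _ (fun q => lof R ℕ (fun q => shift G q) (q + 1) ∘ₗ ι q) ∘ₗ
      (decomposeLinearEquiv G).toLinearMap)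
    (decompose_lhom_ext G fun q => LinearMap.ext fun a => by
      simp [decomposeLinearEquiv_of_mem G a.2, coe_ι])
    (linearMap_ext R fun q => LinearMap.ext fun a => by
      cases q with
      | zero =>
        obtain rfl : a = 0 := Subsingleton.elim (α := (⊥ : Submodule R M)) _ _
        simp only [map_zero]
      | succ q =>
        have ha : (a : M) ∈ G q := a.2
        have hι : ι q ⟨a, ha⟩ = a := rfl
        simp [decomposeLinearEquiv_of_mem G ha, hι])

end Decomposition

section CDGA

variable {R C C' C'' : Type*} [CommRing R] [Ring C] [Algebra R C] [Ring C'] [Algebra R C']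
  [Ring C''] [Algebra R C'']

/-- The differential `d` makes the graded algebra `(C, G)` a graded commutative dga. -/
structure IsCDGA (G : ℕ → Submodule R C) (d : C →ₗ[R] C) : Prop where
  gcomm : ∀ {p q : ℕ} {a b : C}, a ∈ G p → b ∈ G q → a * b = (-1 : ℤ) ^ (p * q) • (b * a)
  map_mem : ∀ {q : ℕ} {a : C}, a ∈ G q → d a ∈ G (q + 1)
  map_map : ∀ a : C, d (d a) = 0
  leibniz : ∀ {p : ℕ} {a : C} (b : C), a ∈ G p → d (a * b) = d a * b + (-1 : ℤ) ^ p • (a * d b)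

/-- The algebra map `f` is a morphism of dgas. -/
structure IsDGAHom (G : ℕ → Submodule R C) (d : C →ₗ[R] C) (G' : ℕ → Submodule R C')
    (d' : C' →ₗ[R] C') (f : C →ₐ[R] C') : Prop where
  map_d : ∀ a, f (d a) = d' (f a)
  map_mem : ∀ (p : ℕ) (a : C), a ∈ G p → f a ∈ G' p

variable {G : ℕ → Submodule R C} {d : C →ₗ[R] C} {G' : ℕ → Submodule R C'} {d' : C' →ₗ[R] C'}
  {G'' : ℕ → Submodule R C''} {d'' : C'' →ₗ[R] C''}

theorem IsDGAHom.id : IsDGAHom G d G d (AlgHom.id R C) := ⟨fun _ => rfl, fun _ _ ha => ha⟩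

theorem IsDGAHom.comp {f : C →ₐ[R] C'} {g : C' →ₐ[R] C''} (hg : IsDGAHom G' d' G'' d'' g)
    (hf : IsDGAHom G d G' d' f) : IsDGAHom G d G'' d'' (g.comp f) where
  map_d a := by simp only [AlgHom.comp_apply, hf.map_d, hg.map_d]
  map_mem p a ha := hg.map_mem p _ (hf.map_mem p a ha)

namespace IsCDGA

variable [GradedAlgebra G]

theorem map_one (h : IsCDGA G d) : d 1 = 0 := by
  simpa using h.leibniz (p := 0) 1 SetLike.GradedOne.one_mem

theorem map_mul (h : IsCDGA G d) (a b : C) : d (a * b) = d a * b + signInvol G a * d b := by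
  induction a using DirectSum.Decomposition.inductionOn G with
  | zero => simp
  | homogeneous a => rw [h.leibniz b a.2, signInvol_of_mem a.2, smul_mul_assoc]
  | add a a' ha ha' => simp only [map_add, add_mul, ha, ha']; abel

theorem signInvol_map_d (h : IsCDGA G d) (a : C) : signInvol G (d a) = -d (signInvol G a) := by
  induction a using DirectSum.Decomposition.inductionOn G with
  | zero => simp
  | homogeneous a =>
    rw [signInvol_of_mem a.2, signInvol_of_mem (h.map_mem a.2), map_zsmul, pow_succ, mul_neg_one,
      neg_smul]
  | add a b ha hb => simp only [map_add, ha, hb, neg_add]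

theorem signInvol_mul_of_mem_shift (h : IsCDGA G d) {p q : ℕ} {a b : C} (ha : a ∈ G p)
    (hb : b ∈ shift G q) : signInvol G a * b = (-1 : ℤ) ^ (p * q) • (b * a) := by
  cases q with
  | zero =>
    obtain rfl : b = 0 := hb
    simp
  | succ q => rw [signInvol_of_mem ha, smul_mul_assoc, h.gcomm ha hb, smul_smul, ← pow_add,
      Nat.mul_succ, Nat.add_comm]

end IsCDGA

theorem signInvol_of_mem_shift [GradedAlgebra G] {q : ℕ} {a : C} (ha : a ∈ shift G q) :
    signInvol G a = -((-1 : ℤ) ^ q • a) := by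
  cases q with
  | zero =>
    obtain rfl : a = 0 := ha
    simp
  | succ q => rw [signInvol_of_mem (G := G) ha, pow_succ, mul_neg_one, neg_smul, neg_neg]

end CDGA

section PathAlgebra

variable {R C : Type*} [CommRing R] [Ring C] [Algebra R C]

/-- The algebra `C` regarded as a bimodule over itself, with left multiplication twisted by the sign
involution: the bimodule of multiples `dt * c` of a symbol `dt` of degree one. -/
def SignTwist (_G : ℕ → Submodule R C) : Type _ := C

namespace SignTwist

variable (G : ℕ → Submodule R C)

instance : AddCommGroup (SignTwist G) := inferInstanceAs (AddCommGroup C)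
instance : Module R (SignTwist G) := inferInstanceAs (Module R C)
instance : Module Cᵐᵒᵖ (SignTwist G) := inferInstanceAs (Module Cᵐᵒᵖ C)
instance : IsScalarTower R Cᵐᵒᵖ (SignTwist G) := inferInstanceAs (IsScalarTower R Cᵐᵒᵖ C)

variable [GradedAlgebra G]

noncomputable instance : Module C (SignTwist G) := .compHom C (signInvol G).toRingHom

instance : SMulCommClass C Cᵐᵒᵖ (SignTwist G) :=
  ⟨fun a c (b : C) => (mul_assoc (signInvol G a) b c.unop).symm⟩

instance : IsScalarTower R C (SignTwist G) :=
  ⟨fun r a (b : C) => by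
    change signInvol G (r • a) * b = r • (signInvol G a * b)
    rw [map_smul, smul_mul_assoc]⟩

end SignTwist

/-- The algebra of forms `a + dt * b` with `a b : C`, where `dt` has degree one and square zero. -/
abbrev PathAlgebra (G : ℕ → Submodule R C) : Type _ :=
  TrivSqZeroExt C (SignTwist G)

namespace PathAlgebra

variable (G : ℕ → Submodule R C) [GradedAlgebra G]

/-- The coefficient `a` of `a + dt * b`. -/
noncomputable def base : PathAlgebra G →ₐ[R] C := TrivSqZeroExt.fstHom R C (SignTwist G)

/-- The coefficient `b` of `a + dt * b`. -/
noncomputable def dtCoeff : PathAlgebra G →ₗ[R] C :=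
  (TrivSqZeroExt.sndHom C (SignTwist G)).restrictScalars R

/-- The forms `a + dt * 0`. -/
noncomputable def const : C →ₐ[R] PathAlgebra G := TrivSqZeroExt.inlAlgHom R C (SignTwist G)

variable {G}

theorem ext {x y : PathAlgebra G} (hbase : base G x = base G y)
    (hdt : dtCoeff G x = dtCoeff G y) : x = y :=
  TrivSqZeroExt.ext hbase hdt

theorem dtCoeff_mul (x y : PathAlgebra G) :
    dtCoeff G (x * y) = signInvol G (base G x) * dtCoeff G y + dtCoeff G x * base G y := rfl

/-- The total grading, in which `dt` has degree one. -/
noncomputable def grading (G : ℕ → Submodule R C) [GradedAlgebra G] (q : ℕ) :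
    Submodule R (PathAlgebra G) :=
  (G q).comap (base G).toLinearMap ⊓ (shift G q).comap (dtCoeff G)

theorem const_mem_grading {q : ℕ} {a : C} (ha : a ∈ G q) : const G a ∈ grading G q :=
  ⟨ha, zero_mem (shift G q)⟩

theorem mem_grading {q : ℕ} {x : PathAlgebra G} :
    x ∈ grading G q ↔ base G x ∈ G q ∧ dtCoeff G x ∈ shift G q := Iff.rfl

theorem mul_mem_shift {p q : ℕ} {a b : C} (ha : a ∈ G p) (hb : b ∈ shift G q) :
    a * b ∈ shift G (p + q) := by
  cases q with
  | zero =>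
    obtain rfl : b = 0 := hb
    simp
  | succ q => exact SetLike.GradedMul.mul_mem (A := G) ha hb

theorem shift_mul_mem {p q : ℕ} {a b : C} (ha : a ∈ shift G p) (hb : b ∈ G q) :
    a * b ∈ shift G (p + q) := by
  cases p with
  | zero =>
    obtain rfl : a = 0 := ha
    simp
  | succ p =>
    rw [Nat.add_right_comm]
    exact SetLike.GradedMul.mul_mem (A := G) (i := p) ha hb

noncomputable instance : GradedAlgebra (grading G) where
  one_mem := ⟨SetLike.GradedOne.one_mem (A := G), zero_mem (shift G 0)⟩
  mul_mem _ _ _ _ hx hy := ⟨SetLike.GradedMul.mul_mem (A := G) hx.1 hy.1,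
    add_mem (mul_mem_shift (signInvol_mem hx.1) hy.2) (shift_mul_mem hx.2 hy.1)⟩
  toDecomposition :=
    letI := shiftDecomposition G
    letI := prodDecomposition G (shift G)
    inferInstanceAs (DirectSum.Decomposition fun q => (G q).prod (shift G q))

/-- The differential `a + dt * b ↦ d a + dt * (∂ a - d b)`, where the derivation `∂` of `C` plays
the role of `∂/∂t`. -/
noncomputable def differential (G : ℕ → Submodule R C) [GradedAlgebra G] (d del : C →ₗ[R] C) :
    PathAlgebra G →ₗ[R] PathAlgebra G :=
  .prod (d ∘ₗ (base G).toLinearMap) (del ∘ₗ (base G).toLinearMap - d ∘ₗ dtCoeff G)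

section

variable {d del : C →ₗ[R] C}

theorem base_differential (x : PathAlgebra G) :
    base G (differential G d del x) = d (base G x) := rfl

theorem dtCoeff_differential (x : PathAlgebra G) :
    dtCoeff G (differential G d del x) = del (base G x) - d (dtCoeff G x) := rfl

theorem isCDGA (h : IsCDGA G d) (hdel_mem : ∀ q, ∀ a ∈ G q, del a ∈ G q)
    (hdel_mul : ∀ a b, del (a * b) = del a * b + a * del b) (hdel_d : ∀ a, del (d a) = d (del a)) :
    IsCDGA (grading G) (differential G d del) where
  gcomm {p q x y} hx hy := by
    rw [mem_grading] at hx hy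
    refine ext (by rw [map_zsmul, map_mul, map_mul, h.gcomm hx.1 hy.1]) ?_
    rw [map_zsmul, dtCoeff_mul, dtCoeff_mul, h.signInvol_mul_of_mem_shift hx.1 hy.2,
      h.signInvol_mul_of_mem_shift hy.1 hx.2, smul_add, smul_smul, mul_comm q p, ← mul_pow,
      neg_one_mul, neg_neg, one_pow, one_smul, add_comm]
  map_mem {q x} hx := by
    rw [mem_grading] at hx ⊢
    refine ⟨h.map_mem hx.1, sub_mem (hdel_mem q _ hx.1) ?_⟩
    cases q with
    | zero =>
      obtain hzero : dtCoeff G x = 0 := hx.2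
      simp [hzero]
    | succ q => exact h.map_mem (q := q) hx.2
  map_map x := ext (h.map_map _) (by
    simp only [dtCoeff_differential, base_differential, map_sub, hdel_d, h.map_map, sub_zero,
      sub_self, map_zero])
  leibniz {p x} y hx := by
    rw [mem_grading] at hx
    refine ext ?_ ?_
    · simp only [base_differential, map_add, map_zsmul, map_mul (base G), h.leibniz _ hx.1]
    · have hsign : (-1 : ℤ) ^ p • dtCoeff G (x * differential G d del y) =
          base G x * (del (base G y) - d (dtCoeff G y)) -
            signInvol G (dtCoeff G x) * d (base G y) := by
        rw [dtCoeff_mul, dtCoeff_differential, base_differential, signInvol_of_mem hx.1,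
          signInvol_of_mem_shift hx.2, smul_add, smul_mul_assoc, smul_smul, ← mul_pow]
        simp [mul_assoc]
      rw [map_add, map_zsmul, hsign]
      simp only [map_add, dtCoeff_differential, dtCoeff_mul, base_differential,
        map_mul (base G), h.map_mul, hdel_mul, h.signInvol_map_d, signInvol_signInvol]
      noncomm_ring

end

end PathAlgebra

end PathAlgebra

section PathAlgebraMap

variable {R C C' : Type*} [CommRing R] [Ring C] [Algebra R C] [Ring C'] [Algebra R C']
  {G : ℕ → Submodule R C} [GradedAlgebra G] {G' : ℕ → Submodule R C'} [GradedAlgebra G']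

namespace PathAlgebra

/-- The path algebra is functorial: `a + dt * b ↦ f a + dt * f b`. -/
noncomputable def map (f : C →ₐ[R] C') (hf : ∀ q, ∀ a ∈ G q, f a ∈ G' q) :
    PathAlgebra G →ₐ[R] PathAlgebra G' :=
  AlgHom.ofLinearMap
    (.prod (f.toLinearMap ∘ₗ (base G).toLinearMap) (f.toLinearMap ∘ₗ dtCoeff G))
    (ext (map_one f) (map_zero f))
    (fun x y => by
      refine ext (map_mul f _ _) ?_
      change f (signInvol G (base G x) * dtCoeff G y + dtCoeff G x * base G y) =
        signInvol G' (f (base G x)) * f (dtCoeff G y) + f (dtCoeff G x) * f (base G y)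
      rw [map_add, map_mul, map_mul]
      exact congrArg (· * _ + _) (signInvol_map f.toLinearMap hf _).symm)

variable {f : C →ₐ[R] C'} {hf : ∀ q, ∀ a ∈ G q, f a ∈ G' q}

theorem base_map (x : PathAlgebra G) : base G' (map f hf x) = f (base G x) := rfl

theorem dtCoeff_map (x : PathAlgebra G) : dtCoeff G' (map f hf x) = f (dtCoeff G x) := rfl

theorem map_const (a : C) : map f hf (const G a) = const G' (f a) :=
  ext rfl (map_zero f)

theorem map_isDGAHom {d del : C →ₗ[R] C} {d' del' : C' →ₗ[R] C'} (hd : ∀ a, f (d a) = d' (f a))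
    (hdel : ∀ a, f (del a) = del' (f a)) :
    IsDGAHom (grading G) (differential G d del) (grading G') (differential G' d' del')
      (map f hf) where
  map_d x := ext (hd _) (by
    rw [dtCoeff_map, dtCoeff_differential, dtCoeff_differential, map_sub, hdel, hd, base_map,
      dtCoeff_map])
  map_mem p x hx := by
    refine ⟨hf p _ hx.1, ?_⟩
    cases p with
    | zero =>
      have hzero : dtCoeff G x = 0 := hx.2
      change f (dtCoeff G x) = 0
      rw [hzero, map_zero]
    | succ p => exact hf p _ hx.2

end PathAlgebra

end PathAlgebraMap

section BaseChange

variable {R C : Type*} [CommRing R] [Ring C] [Algebra R C] (S : Type*) [CommRing S] [Algebra R S]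

/-- The grading of `S ⊗ C` by the degree of the second factor. -/
def baseChangeGrading (G : ℕ → Submodule R C) (q : ℕ) : Submodule R (S ⊗[R] C) :=
  ((G q).baseChange S).restrictScalars R

noncomputable instance (G : ℕ → Submodule R C) [GradedAlgebra G] :
    GradedAlgebra (baseChangeGrading S G) where
  one_mem := SetLike.GradedOne.one_mem (A := fun q => (G q).baseChange S)
  mul_mem := SetLike.GradedMul.mul_mem (A := fun q => (G q).baseChange S)
  decompose' := DirectSum.Decomposition.decompose' (ℳ := fun q => (G q).baseChange S)
  left_inv := DirectSum.Decomposition.left_inv (ℳ := fun q => (G q).baseChange S)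
  right_inv := DirectSum.Decomposition.right_inv (ℳ := fun q => (G q).baseChange S)

variable {S} {G : ℕ → Submodule R C}

theorem tmul_mem_baseChangeGrading {q : ℕ} (s : S) {a : C} (ha : a ∈ G q) :
    s ⊗ₜ[R] a ∈ baseChangeGrading S G q :=
  Submodule.tmul_mem_baseChange_of_mem _ ha

@[elab_as_elim]
theorem baseChangeGrading_induction {q : ℕ}
    {motive : (x : S ⊗[R] C) → x ∈ baseChangeGrading S G q → Prop}
    (tmul : ∀ s a (ha : a ∈ G q), motive (s ⊗ₜ a) (tmul_mem_baseChangeGrading s ha))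
    (add : ∀ x y hx hy, motive x hx → motive y hy → motive (x + y) (add_mem hx hy))
    {x : S ⊗[R] C} (hx : x ∈ baseChangeGrading S G q) : motive x hx := by
  obtain ⟨y, rfl⟩ : ∃ y, (G q).subtype.baseChange S y = x := hx
  induction y using TensorProduct.induction_on with
  | zero => simpa using tmul 0 0 (zero_mem _)
  | tmul s a => exact tmul s a a.2
  | add y z hy hz => simpa only [map_add] using add _ _ ⟨y, rfl⟩ ⟨z, rfl⟩ hy hz

theorem IsCDGA.baseChange {d : C →ₗ[R] C} (h : IsCDGA G d) :
    IsCDGA (baseChangeGrading S G) (d.lTensor S) where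
  gcomm {p q x y} hx hy := by
    induction hx using baseChangeGrading_induction with
    | add x x' _ _ hx hx' => rw [add_mul, mul_add, hx, hx', smul_add]
    | tmul s a ha =>
      induction hy using baseChangeGrading_induction with
      | add y y' _ _ hy hy' => rw [add_mul, mul_add, hy, hy', smul_add]
      | tmul t b hb =>
        rw [Algebra.TensorProduct.tmul_mul_tmul, Algebra.TensorProduct.tmul_mul_tmul, mul_comm s t,
          h.gcomm ha hb, tmul_smul]
  map_mem hx := by
    induction hx using baseChangeGrading_induction with
    | add x y _ _ hx hy => simpa only [map_add] using add_mem hx hy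
    | tmul s a ha => exact tmul_mem_baseChangeGrading s (h.map_mem ha)
  map_map x := by
    rw [← LinearMap.lTensor_comp_apply, show d ∘ₗ d = 0 from LinearMap.ext h.map_map,
      LinearMap.lTensor_zero, LinearMap.zero_apply]
  leibniz {p x} y hx := by
    induction hx using baseChangeGrading_induction with
    | add x x' _ _ hx hx' => simp only [add_mul, map_add, hx, hx', smul_add]; abel
    | tmul s a ha =>
      induction y using TensorProduct.induction_on with
      | zero => simp
      | add y y' hy hy' => simp only [mul_add, map_add, hy, hy', smul_add]; abel
      | tmul t b =>
        simp only [Algebra.TensorProduct.tmul_mul_tmul, LinearMap.lTensor_tmul, h.leibniz b ha,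
          tmul_add, tmul_smul]

theorem rTensor_mem_baseChangeGrading (del : S →ₗ[R] S) (q : ℕ) :
    ∀ x ∈ baseChangeGrading S G q, del.rTensor C x ∈ baseChangeGrading S G q := fun x hx => by
  induction hx using baseChangeGrading_induction with
  | add x y _ _ hx hy => simpa only [map_add] using add_mem hx hy
  | tmul s a ha => exact tmul_mem_baseChangeGrading (del s) ha

theorem rTensor_derivation_mul (del : Derivation R S S) (x y : S ⊗[R] C) :
    (del : S →ₗ[R] S).rTensor C (x * y) =
      (del : S →ₗ[R] S).rTensor C x * y + x * (del : S →ₗ[R] S).rTensor C y := by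
  induction x using TensorProduct.induction_on with
  | zero => simp
  | add x x' hx hx' => simp only [add_mul, map_add, hx, hx']; abel
  | tmul s a =>
    induction y using TensorProduct.induction_on with
    | zero => simp
    | add y y' hy hy' => simp only [mul_add, map_add, hy, hy']; abel
    | tmul t b =>
      simp only [Algebra.TensorProduct.tmul_mul_tmul, LinearMap.rTensor_tmul,
        Derivation.coeFn_coe, Derivation.leibniz, smul_eq_mul, add_tmul, mul_comm t, add_comm]

theorem rTensor_lTensor_comm (del : S →ₗ[R] S) (d : C →ₗ[R] C) (x : S ⊗[R] C) :
    del.rTensor C (d.lTensor S x) = d.lTensor S (del.rTensor C x) := by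
  rw [← LinearMap.comp_apply, ← LinearMap.comp_apply, LinearMap.rTensor_comp_lTensor,
    LinearMap.lTensor_comp_rTensor]

end BaseChange

section Stokes

open TensorProduct Polynomial

variable {𝕜 C C' : Type*} [Field 𝕜] [Ring C] [Algebra 𝕜 C] [Ring C'] [Algebra 𝕜 C']

variable (𝕜) in
/-- The integral of a polynomial over `[0, 1]`. -/
noncomputable def polyIntegral : 𝕜[X] →ₗ[𝕜] 𝕜 :=
  Polynomial.lsum fun i => ((i : 𝕜) + 1)⁻¹ • LinearMap.id

theorem polyIntegral_derivative [CharZero 𝕜] (p : 𝕜[X]) :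
    polyIntegral 𝕜 (derivative p) = aeval 1 p - aeval 0 p := by
  induction p using Polynomial.induction_on' with
  | add p q hp hq => simp only [map_add, hp, hq]; ring
  | monomial i a =>
    cases i with
    | zero => simp
    | succ i =>
      have : (i : 𝕜) + 1 ≠ 0 := Nat.cast_add_one_ne_zero i
      simp [polyIntegral, Polynomial.lsum_apply, sum_monomial_index, aeval_monomial,
        inv_mul_cancel_left₀ this, mul_comm a]

theorem rTensor_polyIntegral_derivative [CharZero 𝕜] (x : 𝕜[X] ⊗[𝕜] C) :
    TensorProduct.lid 𝕜 C ((polyIntegral 𝕜).rTensor C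
      ((derivative' (R := 𝕜) : 𝕜[X] →ₗ[𝕜] 𝕜[X]).rTensor C x)) =
      Algebra.TensorProduct.lid 𝕜 C (Algebra.TensorProduct.map (aeval 1) (AlgHom.id 𝕜 C) x) -
        Algebra.TensorProduct.lid 𝕜 C (Algebra.TensorProduct.map (aeval 0) (AlgHom.id 𝕜 C) x) := by
  induction x using TensorProduct.induction_on with
  | zero => simp only [map_zero, sub_zero]
  | tmul p a =>
    change polyIntegral 𝕜 (derivative p) • a = aeval (1 : 𝕜) p • a - aeval (0 : 𝕜) p • a
    rw [polyIntegral_derivative, sub_smul]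
  | add x y hx hy => simp only [map_add, hx, hy]; abel

/-- The dga `C[t, dt]` of polynomial forms on the line with values in a graded algebra `C`. -/
abbrev PolyPath (G : ℕ → Submodule 𝕜 C) : Type _ :=
  PathAlgebra (baseChangeGrading 𝕜[X] G)

namespace PolyPath

section

variable (G : ℕ → Submodule 𝕜 C) [GradedAlgebra G]

/-- The total grading of `C[t, dt]`. -/
noncomputable abbrev grading : ℕ → Submodule 𝕜 (PolyPath G) :=
  PathAlgebra.grading (baseChangeGrading 𝕜[X] G)

/-- The total differential of `C[t, dt]`, for a differential `d` of `C`. -/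
noncomputable def differential (d : C →ₗ[𝕜] C) : PolyPath G →ₗ[𝕜] PolyPath G :=
  PathAlgebra.differential (baseChangeGrading 𝕜[X] G) (d.lTensor 𝕜[X])
    ((derivative' (R := 𝕜) : 𝕜[X] →ₗ[𝕜] 𝕜[X]).rTensor C)

/-- Restriction of polynomial forms to the point `t = s`. -/
noncomputable def evalAt (s : 𝕜) : PolyPath G →ₐ[𝕜] C :=
  (Algebra.TensorProduct.lid 𝕜 C).toAlgHom.comp
    ((Algebra.TensorProduct.map (aeval s) (AlgHom.id 𝕜 C)).comp (PathAlgebra.base _))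

/-- Integration of polynomial forms over `0 ≤ t ≤ 1`. -/
noncomputable def fiberIntegral : PolyPath G →ₗ[𝕜] C :=
  (TensorProduct.lid 𝕜 C).toLinearMap ∘ₗ (polyIntegral 𝕜).rTensor C ∘ₗ PathAlgebra.dtCoeff _

end

variable {G : ℕ → Submodule 𝕜 C} [GradedAlgebra G] {G' : ℕ → Submodule 𝕜 C'} [GradedAlgebra G']
  {d : C →ₗ[𝕜] C} {d' : C' →ₗ[𝕜] C'}

theorem isCDGA (h : IsCDGA G d) : IsCDGA (grading G) (differential G d) :=
  PathAlgebra.isCDGA h.baseChange (rTensor_mem_baseChangeGrading _)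
    (rTensor_derivation_mul derivative') (rTensor_lTensor_comm _ d)

theorem fiberIntegral_mem {q : ℕ} {x : PolyPath G} (hx : x ∈ grading G q) :
    fiberIntegral G x ∈ shift G q := by
  have hdt : PathAlgebra.dtCoeff _ x ∈ shift (baseChangeGrading 𝕜[X] G) q := hx.2
  change TensorProduct.lid 𝕜 C ((polyIntegral 𝕜).rTensor C (PathAlgebra.dtCoeff _ x)) ∈ _
  generalize PathAlgebra.dtCoeff _ x = y at hdt
  cases q with
  | zero =>
    obtain rfl : y = 0 := hdt
    simp
  | succ q =>
    change y ∈ baseChangeGrading 𝕜[X] G q at hdt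
    induction hdt using baseChangeGrading_induction with
    | tmul p a ha => exact Submodule.smul_mem _ _ ha
    | add y z _ _ hy hz => simpa only [map_add] using add_mem hy hz

theorem evalAt_isDGAHom (d : C →ₗ[𝕜] C) (s : 𝕜) :
    IsDGAHom (grading G) (differential G d) G d (evalAt G s) where
  map_d x := by
    change Algebra.TensorProduct.lid 𝕜 C (Algebra.TensorProduct.map (aeval s) (AlgHom.id 𝕜 C)
        (d.lTensor 𝕜[X] (PathAlgebra.base _ x))) =
      d (Algebra.TensorProduct.lid 𝕜 C (Algebra.TensorProduct.map (aeval s) (AlgHom.id 𝕜 C)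
        (PathAlgebra.base _ x)))
    generalize PathAlgebra.base _ x = y
    induction y using TensorProduct.induction_on with
    | zero => simp only [map_zero]
    | tmul p a => exact (map_smul d (aeval s p) a).symm
    | add x y hx hy => simp only [map_add, hx, hy]
  map_mem q x hx := by
    have hbase : PathAlgebra.base _ x ∈ baseChangeGrading 𝕜[X] G q := hx.1
    change Algebra.TensorProduct.lid 𝕜 C (Algebra.TensorProduct.map (aeval s) (AlgHom.id 𝕜 C)
        (PathAlgebra.base _ x)) ∈ G q
    generalize PathAlgebra.base _ x = y at hbase
    induction hbase using baseChangeGrading_induction with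
    | tmul p a ha => exact Submodule.smul_mem _ _ ha
    | add y z _ _ hy hz => simpa only [map_add] using add_mem hy hz

theorem fiberIntegral_differential_add [CharZero 𝕜] (d : C →ₗ[𝕜] C) (x : PolyPath G) :
    fiberIntegral G (differential G d x) + d (fiberIntegral G x) =
      evalAt G 1 x - evalAt G 0 x := by
  have hcomm (y : 𝕜[X] ⊗[𝕜] C) : TensorProduct.lid 𝕜 C ((polyIntegral 𝕜).rTensor C
      (d.lTensor 𝕜[X] y)) = d (TensorProduct.lid 𝕜 C ((polyIntegral 𝕜).rTensor C y)) := by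
    induction y using TensorProduct.induction_on with
    | zero => simp only [map_zero]
    | tmul p a => exact (map_smul d (polyIntegral 𝕜 p) a).symm
    | add x y hx hy => simp only [map_add, hx, hy]
  refine Eq.trans ?_ (rTensor_polyIntegral_derivative (PathAlgebra.base _ x))
  simp only [fiberIntegral, differential, LinearMap.comp_apply, LinearEquiv.coe_coe,
    PathAlgebra.dtCoeff_differential, map_sub, hcomm, sub_add_cancel]

/-- A graded map of coefficients extends to polynomial forms. -/
noncomputable def map (f : C →ₐ[𝕜] C') (hf : ∀ q, ∀ a ∈ G q, f a ∈ G' q) :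
    PolyPath G →ₐ[𝕜] PolyPath G' :=
  PathAlgebra.map (Algebra.TensorProduct.map (AlgHom.id 𝕜 𝕜[X]) f) fun q x hx => by
    induction hx using baseChangeGrading_induction with
    | tmul p a ha => exact tmul_mem_baseChangeGrading p (hf q a ha)
    | add x y _ _ hx hy => simpa only [map_add] using add_mem hx hy

theorem map_isDGAHom {f : C →ₐ[𝕜] C'} (hf : IsDGAHom G d G' d' f) :
    IsDGAHom (grading G) (differential G d) (grading G') (differential G' d')
      (map f hf.map_mem) :=
  PathAlgebra.map_isDGAHom
    (fun x => by
      induction x using TensorProduct.induction_on with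
      | zero => simp only [map_zero]
      | tmul p a => exact congrArg (p ⊗ₜ[𝕜] ·) (hf.map_d a)
      | add x y hx hy => simp only [map_add, hx, hy])
    (fun x => by
      induction x using TensorProduct.induction_on with
      | zero => simp only [map_zero]
      | tmul p a => rfl
      | add x y hx hy => simp only [map_add, hx, hy])

theorem fiberIntegral_map {f : C →ₐ[𝕜] C'} {hf : ∀ q, ∀ a ∈ G q, f a ∈ G' q} (x : PolyPath G) :
    fiberIntegral G' (map f hf x) = f (fiberIntegral G x) := by
  change TensorProduct.lid 𝕜 C' ((polyIntegral 𝕜).rTensor C' (Algebra.TensorProduct.map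
      (AlgHom.id 𝕜 𝕜[X]) f (PathAlgebra.dtCoeff _ x))) =
    f (TensorProduct.lid 𝕜 C ((polyIntegral 𝕜).rTensor C (PathAlgebra.dtCoeff _ x)))
  generalize PathAlgebra.dtCoeff _ x = y
  induction y using TensorProduct.induction_on with
  | zero => simp only [map_zero]
  | tmul p a => exact (map_smul f (polyIntegral 𝕜 p) a).symm
  | add x y hx hy => simp only [map_add, hx, hy]

end PolyPath

end Stokes

section DeRham

open TensorProduct Polynomial

namespace SimplexForms

theorem isCDGA {n : ℕ} (Ω : SimplexForms n) : IsCDGA Ω.grading Ω.d where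
  gcomm := Ω.gcomm _ _ _ _
  map_mem := Ω.d_mem _ _
  map_map := Ω.d_sq
  leibniz b ha := Ω.leibniz _ _ b ha

end SimplexForms

theorem pullbackProp_iff {m n : ℕ} {Ωm : SimplexForms m} {Ωn : SimplexForms n}
    {a : Fin (n + 1) → Fin (m + 1)} {f : Ωm.A →ₐ[ℂ] Ωn.A} :
    PullbackProp Ωm Ωn a f ↔ IsDGAHom Ωm.grading Ωm.d Ωn.grading Ωn.d f ∧
      ∀ j, f (Ωm.x j) = ∑ i with a i = j, Ωn.x i :=
  ⟨fun h => ⟨⟨h.1, h.2.1⟩, h.2.2⟩, fun h => ⟨h.1.map_d, h.1.map_mem, h.2⟩⟩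

namespace PullbackProp

variable {l m n : ℕ} {Ωl : SimplexForms l} {Ωm : SimplexForms m} {Ωn : SimplexForms n}
  {a : Fin (n + 1) → Fin (m + 1)} {b : Fin (m + 1) → Fin (l + 1)}

theorem isDGAHom {f : Ωm.A →ₐ[ℂ] Ωn.A} (h : PullbackProp Ωm Ωn a f) :
    IsDGAHom Ωm.grading Ωm.d Ωn.grading Ωn.d f :=
  (pullbackProp_iff.mp h).1

theorem map_x {f : Ωm.A →ₐ[ℂ] Ωn.A} (h : PullbackProp Ωm Ωn a f) (j : Fin (m + 1)) :
    f (Ωm.x j) = ∑ i with a i = j, Ωn.x i :=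
  h.2.2 j

theorem id : PullbackProp Ωm Ωm _root_.id (AlgHom.id ℂ Ωm.A) :=
  pullbackProp_iff.mpr ⟨.id, fun j => by simp [Finset.sum_filter]⟩

theorem comp {f : Ωm.A →ₐ[ℂ] Ωn.A} {g : Ωl.A →ₐ[ℂ] Ωm.A} (hf : PullbackProp Ωm Ωn a f)
    (hg : PullbackProp Ωl Ωm b g) : PullbackProp Ωl Ωn (b ∘ a) (f.comp g) := by
  refine pullbackProp_iff.mpr ⟨hf.isDGAHom.comp hg.isDGAHom, fun j => ?_⟩
  rw [AlgHom.comp_apply, hg.map_x, map_sum]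
  simp only [hf.map_x]
  rw [Finset.sum_comm' (t' := {i | b (a i) = j}) (s' := fun i => {a i}) (by grind)]
  simp

end PullbackProp

namespace IsPolyDeRham

variable {m n : ℕ} {Ω : SimplexForms n} {C : Type} [Ring C] [Algebra ℂ C]
  {G : ℕ → Submodule ℂ C} [GradedAlgebra G] {d : C →ₗ[ℂ] C}

theorem existsUnique_lift (hΩ : IsPolyDeRham Ω) (h : IsCDGA G d) {y : Fin (n + 1) → C}
    (hy : ∀ i, y i ∈ G 0) (hsum : ∑ i, y i = 1) :
    ∃! φ : Ω.A →ₐ[ℂ] C, IsDGAHom Ω.grading Ω.d G d φ ∧ ∀ i, φ (Ω.x i) = y i := by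
  obtain ⟨φ, ⟨hd, hmem, hx⟩, huniq⟩ := hΩ
    { A := C, grading := G, d := d, x := y, x_mem := hy, sum_x := hsum
      gcomm := fun _ _ _ _ ha hb => h.gcomm ha hb
      d_mem := fun _ _ ha => h.map_mem ha
      d_sq := h.map_map
      leibniz := fun _ _ b ha => h.leibniz b ha
      sum_dx := by rw [← map_sum, hsum, h.map_one] }
  exact ⟨φ, ⟨⟨hd, hmem⟩, hx⟩, fun ψ hψ => huniq ψ ⟨hψ.1.map_d, hψ.1.map_mem, hψ.2⟩⟩

/-- The morphism of dgas out of `A^*(Δ_n)` with prescribed images `y i` of the coordinates. -/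
noncomputable def lift (hΩ : IsPolyDeRham Ω) (h : IsCDGA G d) {y : Fin (n + 1) → C}
    (hy : ∀ i, y i ∈ G 0) (hsum : ∑ i, y i = 1) : Ω.A →ₐ[ℂ] C :=
  (hΩ.existsUnique_lift h hy hsum).choose

section

variable (hΩ : IsPolyDeRham Ω) (h : IsCDGA G d) {y : Fin (n + 1) → C} (hy : ∀ i, y i ∈ G 0)
  (hsum : ∑ i, y i = 1)

theorem lift_isDGAHom : IsDGAHom Ω.grading Ω.d G d (hΩ.lift h hy hsum) :=
  (hΩ.existsUnique_lift h hy hsum).choose_spec.1.1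

theorem lift_x (i : Fin (n + 1)) : hΩ.lift h hy hsum (Ω.x i) = y i :=
  (hΩ.existsUnique_lift h hy hsum).choose_spec.1.2 i

end

theorem algHom_ext (hΩ : IsPolyDeRham Ω) (h : IsCDGA G d) {φ ψ : Ω.A →ₐ[ℂ] C}
    (hφ : IsDGAHom Ω.grading Ω.d G d φ) (hψ : IsDGAHom Ω.grading Ω.d G d ψ)
    (hx : ∀ i, φ (Ω.x i) = ψ (Ω.x i)) : φ = ψ :=
  (hΩ.existsUnique_lift h (fun i => hψ.map_mem 0 _ (Ω.x_mem i))
    (by rw [← map_sum, Ω.sum_x, map_one])).unique ⟨hφ, hx⟩ ⟨hψ, fun _ => rfl⟩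

/-- The pullback `a^*` of forms along the affine map of simplices given on vertices by `a`. -/
noncomputable def pullback (hΩ : IsPolyDeRham Ω) (Ω' : SimplexForms m)
    (a : Fin (m + 1) → Fin (n + 1)) : Ω.A →ₐ[ℂ] Ω'.A :=
  hΩ.lift Ω'.isCDGA (y := fun j => ∑ i with a i = j, Ω'.x i)
    (fun _ => sum_mem fun i _ => Ω'.x_mem i)
    (by rw [Finset.sum_fiberwise, Ω'.sum_x])

theorem pullbackProp_pullback (hΩ : IsPolyDeRham Ω) (Ω' : SimplexForms m)
    (a : Fin (m + 1) → Fin (n + 1)) : PullbackProp Ω Ω' a (hΩ.pullback Ω' a) :=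
  pullbackProp_iff.mpr ⟨hΩ.lift_isDGAHom _ _ _, hΩ.lift_x _ _ _⟩

end IsPolyDeRham

theorem PullbackProp.eq_pullback {m n : ℕ} {Ωm : SimplexForms m} {Ωn : SimplexForms n}
    {a : Fin (n + 1) → Fin (m + 1)} {f : Ωm.A →ₐ[ℂ] Ωn.A} (hf : PullbackProp Ωm Ωn a f)
    (hΩ : IsPolyDeRham Ωm) : f = hΩ.pullback Ωn a :=
  hΩ.algHom_ext Ωn.isCDGA hf.isDGAHom (hΩ.pullbackProp_pullback Ωn a).isDGAHom fun j => by
    rw [hf.map_x, (hΩ.pullbackProp_pullback Ωn a).map_x]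

namespace IsPolyDeRham

variable {l m n : ℕ} {Ω : SimplexForms n} (hΩ : IsPolyDeRham Ω)

theorem pullback_id : hΩ.pullback Ω id = AlgHom.id ℂ Ω.A :=
  (PullbackProp.id.eq_pullback hΩ).symm

theorem pullback_comp {Ω' : SimplexForms m} (hΩ' : IsPolyDeRham Ω') (Ω'' : SimplexForms l)
    (a : Fin (m + 1) → Fin (n + 1)) (b : Fin (l + 1) → Fin (m + 1)) :
    (hΩ'.pullback Ω'' b).comp (hΩ.pullback Ω' a) = hΩ.pullback Ω'' (a ∘ b) :=
  ((hΩ'.pullbackProp_pullback Ω'' b).comp (hΩ.pullbackProp_pullback Ω' a)).eq_pullback hΩ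

/-- The coordinates of the straight-line contraction of the simplex to its `k`-th vertex: the `i`-th
barycentric coordinate `t x_i + (1 - t) δ_{ik}`, as a function on the line times the simplex. -/
noncomputable def contractionCoord (Ω : SimplexForms n) (k i : Fin (n + 1)) : ℂ[X] ⊗[ℂ] Ω.A :=
  X ⊗ₜ Ω.x i + if i = k then (1 - X) ⊗ₜ 1 else 0

theorem contractionCoord_mem (k i : Fin (n + 1)) :
    contractionCoord Ω k i ∈ baseChangeGrading ℂ[X] Ω.grading 0 := by
  refine add_mem (tmul_mem_baseChangeGrading _ (Ω.x_mem i)) ?_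
  split_ifs
  · exact tmul_mem_baseChangeGrading _ SetLike.GradedOne.one_mem
  · exact zero_mem _

theorem sum_contractionCoord (a : Fin (m + 1) → Fin (n + 1)) (Ω : SimplexForms m) (l : Fin (m + 1))
    (j : Fin (n + 1)) : ∑ i with a i = j, contractionCoord Ω l i =
      X ⊗ₜ (∑ i with a i = j, Ω.x i) + if j = a l then (1 - X) ⊗ₜ 1 else 0 := by
  simp only [contractionCoord, Finset.sum_add_distrib, tmul_sum, Finset.sum_ite_eq',
    Finset.mem_filter, Finset.mem_univ, true_and, eq_comm (a := j)]

/-- The pullback of forms along the straight-line contraction of the simplex to its `k`-th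
vertex. -/
noncomputable def contraction (k : Fin (n + 1)) : Ω.A →ₐ[ℂ] PolyPath Ω.grading :=
  hΩ.lift (PolyPath.isCDGA Ω.isCDGA)
    (y := fun i => PathAlgebra.const _ (contractionCoord Ω k i))
    (fun i => PathAlgebra.const_mem_grading (contractionCoord_mem k i))
    (by
      have h := sum_contractionCoord (fun _ => (0 : Fin 1)) Ω k 0
      simp only [Finset.filter_true, Ω.sum_x, if_true, ← add_tmul, add_sub_cancel] at h
      rw [← map_sum, h]
      exact map_one _)

theorem contraction_isDGAHom (k : Fin (n + 1)) :
    IsDGAHom Ω.grading Ω.d (PolyPath.grading Ω.grading) (PolyPath.differential Ω.grading Ω.d)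
      (hΩ.contraction k) :=
  hΩ.lift_isDGAHom _ _ _

theorem contraction_x (k i : Fin (n + 1)) :
    hΩ.contraction k (Ω.x i) = PathAlgebra.const _ (contractionCoord Ω k i) :=
  hΩ.lift_x _ _ _ i

theorem evalAt_contraction_x (k i : Fin (n + 1)) (s : ℂ) :
    PolyPath.evalAt Ω.grading s (hΩ.contraction k (Ω.x i)) =
      s • Ω.x i + if i = k then (1 - s) • 1 else 0 := by
  rw [contraction_x]
  change Algebra.TensorProduct.lid ℂ Ω.A (Algebra.TensorProduct.map (aeval s) (AlgHom.id ℂ Ω.A)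
    (contractionCoord Ω k i)) = _
  rw [contractionCoord]
  split_ifs <;> simp

theorem evalAt_one_contraction (k : Fin (n + 1)) :
    (PolyPath.evalAt Ω.grading 1).comp (hΩ.contraction k) = AlgHom.id ℂ Ω.A :=
  hΩ.algHom_ext Ω.isCDGA ((PolyPath.evalAt_isDGAHom _ 1).comp (hΩ.contraction_isDGAHom k)) .id
    fun i => by simp [evalAt_contraction_x]

theorem evalAt_zero_contraction (k : Fin (n + 1)) :
    (PolyPath.evalAt Ω.grading 0).comp (hΩ.contraction k) = hΩ.pullback Ω (Function.const _ k) :=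
  hΩ.algHom_ext Ω.isCDGA ((PolyPath.evalAt_isDGAHom _ 0).comp (hΩ.contraction_isDGAHom k))
    (hΩ.pullbackProp_pullback Ω _).isDGAHom fun i => by
      rw [AlgHom.comp_apply, evalAt_contraction_x, (hΩ.pullbackProp_pullback Ω _).map_x]
      by_cases hik : i = k
      · simp [hik, Ω.sum_x]
      · simp [hik, Ne.symm hik]

theorem map_comp_contraction {Ω' : SimplexForms m} (hΩ' : IsPolyDeRham Ω')
    {a : Fin (m + 1) → Fin (n + 1)} {f : Ω.A →ₐ[ℂ] Ω'.A} (hf : PullbackProp Ω Ω' a f)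
    (l : Fin (m + 1)) :
    (PolyPath.map f hf.isDGAHom.map_mem).comp (hΩ.contraction (a l)) =
      (hΩ'.contraction l).comp f := by
  refine hΩ.algHom_ext (PolyPath.isCDGA Ω'.isCDGA)
    ((PolyPath.map_isDGAHom hf.isDGAHom).comp (hΩ.contraction_isDGAHom _))
    ((hΩ'.contraction_isDGAHom l).comp hf.isDGAHom) fun j => ?_
  simp only [AlgHom.comp_apply, hf.map_x, map_sum, contraction_x,
    ← map_sum (PathAlgebra.const _), sum_contractionCoord]
  rw [PolyPath.map, PathAlgebra.map_const, contractionCoord, ← hf.map_x]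
  congr 1
  split_ifs <;> simp

/-- The Poincaré operator of the contraction of the simplex to its `k`-th vertex. Composing with the
sign involution makes it satisfy the Koszul sign rule after tensoring on the left. -/
noncomputable def poincare (k : Fin (n + 1)) : Ω.A →ₗ[ℂ] Ω.A :=
  PolyPath.fiberIntegral Ω.grading ∘ₗ (hΩ.contraction k).toLinearMap ∘ₗ
    (signInvol Ω.grading).toLinearMap

theorem poincare_mem (k : Fin (n + 1)) {q : ℕ} {y : Ω.A} (hy : y ∈ Ω.grading q) :
    hΩ.poincare k y ∈ shift Ω.grading q :=
  PolyPath.fiberIntegral_mem ((hΩ.contraction_isDGAHom k).map_mem q _ (signInvol_mem hy))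

theorem d_poincare_sub (k : Fin (n + 1)) {q : ℕ} {y : Ω.A} (hy : y ∈ Ω.grading q) :
    Ω.d (hΩ.poincare k y) - hΩ.poincare k (Ω.d y) =
      (-1 : ℤ) ^ q • (y - hΩ.pullback Ω (Function.const _ k) y) := by
  have hstokes (z : Ω.A) : PolyPath.fiberIntegral Ω.grading (hΩ.contraction k (Ω.d z)) +
      Ω.d (PolyPath.fiberIntegral Ω.grading (hΩ.contraction k z)) =
        z - hΩ.pullback Ω (Function.const _ k) z := by
    rw [(hΩ.contraction_isDGAHom k).map_d, PolyPath.fiberIntegral_differential_add,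
      ← AlgHom.comp_apply, ← AlgHom.comp_apply, evalAt_one_contraction, evalAt_zero_contraction,
      AlgHom.id_apply]
  change Ω.d (PolyPath.fiberIntegral _ (hΩ.contraction k (signInvol _ y))) -
    PolyPath.fiberIntegral _ (hΩ.contraction k (signInvol _ (Ω.d y))) = _
  rw [Ω.isCDGA.signInvol_map_d, map_neg, map_neg, sub_neg_eq_add, add_comm, hstokes,
    signInvol_of_mem hy, map_zsmul, smul_sub]

theorem pullback_poincare {Ω' : SimplexForms m} (hΩ' : IsPolyDeRham Ω')
    (a : Fin (m + 1) → Fin (n + 1)) (l : Fin (m + 1)) (y : Ω.A) :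
    hΩ.pullback Ω' a (hΩ.poincare (a l) y) = hΩ'.poincare l (hΩ.pullback Ω' a y) := by
  have ha := hΩ.pullbackProp_pullback Ω' a
  calc hΩ.pullback Ω' a (hΩ.poincare (a l) y)
    _ = PolyPath.fiberIntegral _ ((PolyPath.map _ ha.isDGAHom.map_mem).comp
          (hΩ.contraction (a l)) (signInvol _ y)) :=
        (PolyPath.fiberIntegral_map (hf := ha.isDGAHom.map_mem) _).symm
    _ = hΩ'.poincare l (hΩ.pullback Ω' a y) := by
      rw [hΩ.map_comp_contraction hΩ' ha, AlgHom.comp_apply,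
        ← AlgHom.toLinearMap_apply (hΩ.pullback Ω' a) (signInvol _ y),
        ← signInvol_map (G' := Ω'.grading) _ ha.isDGAHom.map_mem]
      rfl

end IsPolyDeRham

end DeRham

section MaurerCartan

variable {𝕜 V : Type*} [Field 𝕜] [AddCommGroup V] [Module 𝕜 V]

/-- The differential `D` and bracket `Br`, restricted to the pieces `W p i` of degree `p` and
filtration `i`, form a filtered dgLa. The axioms are required on the homogeneous pieces only, since
these need not span `V`. -/
structure IsFilteredDGLA (W : ℤ → ℕ → Submodule 𝕜 V) (D : V →ₗ[𝕜] V) (Br : V →ₗ[𝕜] V →ₗ[𝕜] V) :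
    Prop where
  antitone : ∀ p, Antitone (W p)
  d_mem : ∀ {p i v}, v ∈ W p i → D v ∈ W (p + 1) i
  br_mem : ∀ {p q i j v w}, v ∈ W p i → w ∈ W q j → Br v w ∈ W (p + q) (i + j)
  d_d : ∀ {p i v}, v ∈ W p i → D (D v) = 0
  d_br : ∀ {p q i j v w}, v ∈ W p i → w ∈ W q j → D (Br v w) = Br (D v) w + sgn p • Br v (D w)
  skew : ∀ {p q i j v w}, v ∈ W p i → w ∈ W q j → Br v w = -(sgn (p * q) • Br w v)
  jacobi : ∀ {p q r i j k v w z}, v ∈ W p i → w ∈ W q j → z ∈ W r k →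
    Br v (Br w z) = Br (Br v w) z + sgn (p * q) • Br w (Br v z)

/-- `K` is an ideal of the filtered dgLa `W`, closed under the differential. -/
structure IsDGIdeal (W : ℤ → ℕ → Submodule 𝕜 V) (D : V →ₗ[𝕜] V) (Br : V →ₗ[𝕜] V →ₗ[𝕜] V)
    (K : Submodule 𝕜 V) : Prop where
  d_mem : ∀ {p i v}, v ∈ W p i → v ∈ K → D v ∈ K
  br_mem : ∀ {p q i j v w}, v ∈ W p i → w ∈ W q j → w ∈ K → Br v w ∈ K

/-- `h` is a contracting homotopy of `K`, compatible with the filtration. The sign `sgn p` is that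
of an operator of degree `-1` acting on the right-hand factor of a tensor product. -/
structure IsContraction (W : ℤ → ℕ → Submodule 𝕜 V) (D : V →ₗ[𝕜] V) (K : Submodule 𝕜 V)
    (h : V →ₗ[𝕜] V) : Prop where
  map_mem : ∀ {p i v}, v ∈ W (p + 1) i → h v ∈ W p i
  map_mem_ideal : ∀ {v}, v ∈ K → h v ∈ K
  d_map_sub : ∀ {p i v}, v ∈ W p i → v ∈ K → D (h v) - h (D v) = sgn p • v

/-- The curvature `Dφ + ½[φ, φ]`. -/
def curvature (D : V →ₗ[𝕜] V) (Br : V →ₗ[𝕜] V →ₗ[𝕜] V) (φ : V) : V :=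
  D φ + (1 / 2 : 𝕜) • Br φ φ

variable {W : ℤ → ℕ → Submodule 𝕜 V} {D : V →ₗ[𝕜] V} {Br : V →ₗ[𝕜] V →ₗ[𝕜] V}
  {K : Submodule 𝕜 V} {h : V →ₗ[𝕜] V}

namespace IsFilteredDGLA

variable (hW : IsFilteredDGLA W D Br)
include hW

theorem br_comm_of_degree_one {i j : ℕ} {v w : V} (hv : v ∈ W 1 i) (hw : w ∈ W 1 j) :
    Br v w = Br w v := by
  rw [hW.skew hv hw, show sgn (1 * 1) = -1 from rfl, neg_one_zsmul, neg_neg]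

theorem br_anticomm_of_degree_two {i j : ℕ} {v w : V} (hv : v ∈ W 2 i) (hw : w ∈ W 1 j) :
    Br v w = -Br w v := by
  rw [hW.skew hv hw, show sgn (2 * 1) = 1 from rfl, one_zsmul]

theorem curvature_mem {i : ℕ} {φ : V} (hφ : φ ∈ W 1 i) : curvature D Br φ ∈ W 2 i :=
  add_mem (hW.d_mem hφ)
    (Submodule.smul_mem _ _ (hW.antitone 2 (Nat.le_add_right i i) (hW.br_mem hφ hφ)))

theorem curvature_sub [CharZero 𝕜] {i j : ℕ} {φ α : V} (hφ : φ ∈ W 1 i) (hα : α ∈ W 1 j) :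
    curvature D Br (φ - α) =
      curvature D Br φ - D α - Br φ α + (1 / 2 : 𝕜) • Br α α := by
  simp only [curvature, map_sub, LinearMap.sub_apply, hW.br_comm_of_degree_one hα hφ]
  module

theorem br_br_self [CharZero 𝕜] {i : ℕ} {φ : V} (hφ : φ ∈ W 1 i) : Br φ (Br φ φ) = 0 := by
  have hjacobi := hW.jacobi hφ hφ hφ
  rw [hW.br_anticomm_of_degree_two (hW.br_mem hφ hφ) hφ, show sgn (1 * 1) = -1 from rfl,
    neg_one_zsmul] at hjacobi
  have hthree : (3 : 𝕜) • Br φ (Br φ φ) = 0 := by linear_combination (norm := module) hjacobi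
  exact (smul_eq_zero.mp hthree).resolve_left three_ne_zero

theorem d_curvature [CharZero 𝕜] {i : ℕ} {φ : V} (hφ : φ ∈ W 1 i) :
    D (curvature D Br φ) = -Br φ (curvature D Br φ) := by
  rw [curvature, map_add, hW.d_d hφ, zero_add, map_smul, hW.d_br hφ hφ,
    hW.br_anticomm_of_degree_two (hW.d_mem hφ) hφ, show sgn 1 = -1 from rfl, map_add, map_smul,
    hW.br_br_self hφ]
  module

theorem curvature_sub_contraction [CharZero 𝕜] (hh : IsContraction W D K h) {i : ℕ} {φ : V}
    (hφ : φ ∈ W 1 i) (hcurv : curvature D Br φ ∈ K) :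
    curvature D Br (φ - h (curvature D Br φ)) =
      h (Br φ (curvature D Br φ)) - Br φ (h (curvature D Br φ)) +
        (1 / 2 : 𝕜) • Br (h (curvature D Br φ)) (h (curvature D Br φ)) := by
  have hmem := hW.curvature_mem hφ
  have hd := hh.d_map_sub hmem hcurv
  rw [hW.d_curvature hφ, map_neg, show sgn 2 = 1 from rfl, one_zsmul, sub_neg_eq_add] at hd
  rw [hW.curvature_sub hφ (hh.map_mem hmem), eq_sub_of_add_eq hd]
  abel

theorem exists_curvature_eq_zero [CharZero 𝕜] (hK : IsDGIdeal W D Br K)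
    (hh : IsContraction W D K h) {N : ℕ} (hN : W 2 N = ⊥) {φ : V} (hφ : φ ∈ W 1 1)
    (hcurv : curvature D Br φ ∈ K) :
    ∃ ψ ∈ W 1 1, φ - ψ ∈ K ∧ curvature D Br ψ = 0 := by
  suffices hstep : ∀ j, ∃ ψ ∈ W 1 1, φ - ψ ∈ K ∧ curvature D Br ψ ∈ W 2 (j + 1) ⊓ K by
    obtain ⟨ψ, hψ, hφψ, hc, -⟩ := hstep N
    refine ⟨ψ, hψ, hφψ, ?_⟩
    simpa only [hN, Submodule.mem_bot] using hW.antitone 2 N.le_succ hc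
  intro j
  induction j with
  | zero => exact ⟨φ, hφ, by simp, hW.curvature_mem hφ, hcurv⟩
  | succ j ih =>
    obtain ⟨ψ, hψ, hφψ, hc, hcK⟩ := ih
    set c := curvature D Br ψ
    have hhc : h c ∈ W 1 (j + 1) := hh.map_mem hc
    have hhcK : h c ∈ K := hh.map_mem_ideal hcK
    refine ⟨ψ - h c, sub_mem hψ (hW.antitone 1 (by lia) hhc), ?_, ?_, ?_⟩
    · rw [sub_sub_eq_add_sub, add_sub_right_comm]
      exact add_mem hφψ hhcK
    all_goals rw [hW.curvature_sub_contraction hh hψ hcK]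
    · refine add_mem (sub_mem (hh.map_mem ?_) ?_) (Submodule.smul_mem _ _ ?_)
      · exact hW.antitone 3 (by lia) (hW.br_mem hψ hc)
      · exact hW.antitone 2 (by lia) (hW.br_mem hψ hhc)
      · exact hW.antitone 2 (by lia) (hW.br_mem hhc hhc)
    · exact add_mem (sub_mem (hh.map_mem_ideal (hK.br_mem hψ hc hcK)) (hK.br_mem hψ hhc hhcK))
        (Submodule.smul_mem _ _ (hK.br_mem hhc hhc hhcK))

end IsFilteredDGLA

end MaurerCartan

section Sign

theorem sgn_add (m n : ℤ) : sgn (m + n) = sgn m * sgn n := by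
  simp only [sgn, zpow_add, Units.val_mul]

theorem sgn_congr {m n : ℤ} (h : Even (m - n)) : sgn m = sgn n :=
  congrArg Units.val ((Int.negOnePow_eq_iff m n).mpr h)

theorem neg_one_pow_eq_sgn (q : ℕ) : (-1 : ℤ) ^ q = sgn q := by
  simp [sgn]

theorem neg_sgn (n : ℤ) : -sgn n = sgn (n + 1) := by
  rw [sgn_add, show sgn 1 = -1 from rfl, mul_neg_one]

end Sign

section TensorDGLA

variable {L : GradedDGLA} {A C C' : Type} [CommRing A] [Algebra ℂ A] [Ring C] [Algebra ℂ C]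
  [Ring C'] [Algebra ℂ C'] {G : ℕ → Submodule ℂ C} {G' : ℕ → Submodule ℂ C'}

variable (L A G) in
/-- The part of total degree `p` of `L ⊗ N ⊗ C`, as a submodule of `L ⊗ A ⊗ C`. -/
noncomputable def formsOfDegree (p : ℤ) (N : Submodule ℂ A) :
    Submodule ℂ ((L.L ⊗[ℂ] A) ⊗[ℂ] C) :=
  ⨆ q : ℕ, LinearMap.range
    (TensorProduct.map (TensorProduct.map (L.gr (p - (q : ℤ))).subtype N.subtype) (G q).subtype)

theorem tmul_mem_formsOfDegree {d p : ℤ} {q : ℕ} {N : Submodule ℂ A} {x : L.L} {a : A} {α : C}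
    (hx : x ∈ L.gr p) (ha : a ∈ N) (hα : α ∈ G q) (hd : p + q = d) :
    (x ⊗ₜ a) ⊗ₜ α ∈ formsOfDegree L A G d N := by
  obtain rfl := eq_sub_of_add_eq hd
  exact Submodule.mem_iSup_of_mem q
    ⟨((⟨x, hx⟩ : L.gr (d - q)) ⊗ₜ (⟨a, ha⟩ : N)) ⊗ₜ (⟨α, hα⟩ : G q), rfl⟩

@[elab_as_elim]
theorem formsOfDegree_induction {d : ℤ} {N : Submodule ℂ A}
    {motive : (v : (L.L ⊗[ℂ] A) ⊗[ℂ] C) → v ∈ formsOfDegree L A G d N → Prop}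
    (tmul : ∀ (p : ℤ) (q : ℕ) (x : L.L) (a : A) (α : C) (hx : x ∈ L.gr p) (ha : a ∈ N)
      (hα : α ∈ G q) (hd : p + q = d),
      motive ((x ⊗ₜ a) ⊗ₜ α) (tmul_mem_formsOfDegree hx ha hα hd))
    (add : ∀ v w hv hw, motive v hv → motive w hw → motive (v + w) (add_mem hv hw))
    {v : (L.L ⊗[ℂ] A) ⊗[ℂ] C} (hv : v ∈ formsOfDegree L A G d N) : motive v hv := by
  have zero : motive 0 (zero_mem _) := by
    simpa using tmul d 0 0 0 0 (zero_mem _) (zero_mem _) (zero_mem _) (by simp)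
  induction hv using Submodule.iSup_induction' with
  | zero => exact zero
  | add v w hv hw ihv ihw => exact add v w hv hw ihv ihw
  | mem q v hv =>
    obtain ⟨t, rfl⟩ := hv
    induction t using TensorProduct.induction_on with
    | zero => simpa using zero
    | add s t hs ht => simpa only [map_add] using add _ _ _ _ hs ht
    | tmul s α =>
      induction s using TensorProduct.induction_on with
      | zero => simpa using zero
      | add s t hs ht =>
        simpa only [map_add, add_tmul] using add _ _ _ _ hs ht
      | tmul x a => exact tmul (d - q) q x a α x.2 a.2 α.2 (sub_add_cancel _ _)

theorem formsOfDegree_mono (d : ℤ) : Monotone (formsOfDegree L A G d) := fun N N' hN v hv => by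
  induction hv using formsOfDegree_induction with
  | tmul p q x a α hx ha hα hd => exact tmul_mem_formsOfDegree hx (hN ha) hα hd
  | add v w _ _ hv hw => exact add_mem hv hw

theorem formsOfDegree_bot (d : ℤ) : formsOfDegree L A G d ⊥ = ⊥ :=
  (Submodule.eq_bot_iff _).mpr fun v hv => by
    induction hv using formsOfDegree_induction with
    | tmul p q x a α hx ha hα hd => rw [(Submodule.mem_bot ℂ).mp ha, tmul_zero, zero_tmul]
    | add v w _ _ hv hw => rw [hv, hw, add_zero]

theorem lTensor_mem_formsOfDegree {f : C →ₗ[ℂ] C'} (hf : ∀ q, ∀ α ∈ G q, f α ∈ G' q) {d : ℤ}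
    {N : Submodule ℂ A} {v : (L.L ⊗[ℂ] A) ⊗[ℂ] C} (hv : v ∈ formsOfDegree L A G d N) :
    f.lTensor (L.L ⊗[ℂ] A) v ∈ formsOfDegree L A G' d N := by
  induction hv using formsOfDegree_induction with
  | tmul p q x a α hx ha hα hd => exact tmul_mem_formsOfDegree hx ha (hf q α hα) hd
  | add v w _ _ hv hw => simpa only [map_add] using add_mem hv hw

theorem zsmul_tmul_tmul (n : ℤ) (x : L.L) (a : A) (α : C) :
    ((n • x) ⊗ₜ[ℂ] a) ⊗ₜ[ℂ] α = n • ((x ⊗ₜ[ℂ] a) ⊗ₜ[ℂ] α) :=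
  map_zsmul ((TensorProduct.mk ℂ (L.L ⊗[ℂ] A) C).flip α ∘ₗ (TensorProduct.mk ℂ L.L A).flip a) n x

theorem tmul_tmul_zsmul (n : ℤ) (x : L.L) (a : A) (α : C) :
    (x ⊗ₜ[ℂ] a) ⊗ₜ[ℂ] (n • α) = n • ((x ⊗ₜ[ℂ] a) ⊗ₜ[ℂ] α) :=
  map_zsmul (TensorProduct.mk ℂ (L.L ⊗[ℂ] A) C (x ⊗ₜ[ℂ] a)) n α

theorem map_zsmul_left {M : Type*} [AddCommGroup M] [Module ℂ M] (B : M →ₗ[ℂ] M →ₗ[ℂ] M) (n : ℤ)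
    (u v : M) : B (n • u) v = n • B u v :=
  map_zsmul (B.flip v) n u

variable (L A G) in
/-- `D` is the total differential of `L ⊗ A ⊗ C`, where `C` carries the differential `d`. -/
def IsTotalDifferential (d : C →ₗ[ℂ] C) (D : (L.L ⊗[ℂ] A) ⊗[ℂ] C →ₗ[ℂ] (L.L ⊗[ℂ] A) ⊗[ℂ] C) :
    Prop :=
  ∀ (p : ℤ) (q : ℕ) (x : L.L) (a : A) (α : C), x ∈ L.gr p → α ∈ G q →
    D ((x ⊗ₜ a) ⊗ₜ α) = ((L.dL x ⊗ₜ a) ⊗ₜ α) + sgn p • ((x ⊗ₜ a) ⊗ₜ d α)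

variable (L A G) in
/-- `Br` is the bracket of `L ⊗ A ⊗ C` induced by the bracket of `L` and the products of `A`
and `C`. -/
def IsTotalBracket
    (Br : (L.L ⊗[ℂ] A) ⊗[ℂ] C →ₗ[ℂ] (L.L ⊗[ℂ] A) ⊗[ℂ] C →ₗ[ℂ] (L.L ⊗[ℂ] A) ⊗[ℂ] C) : Prop :=
  ∀ (p p' : ℤ) (q q' : ℕ) (x y : L.L) (a b : A) (α β : C), x ∈ L.gr p → y ∈ L.gr p' →
    α ∈ G q → β ∈ G q' →
    Br ((x ⊗ₜ a) ⊗ₜ α) ((y ⊗ₜ b) ⊗ₜ β) =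
      sgn ((q : ℤ) * p') • ((L.br x y ⊗ₜ (a * b)) ⊗ₜ (α * β))

variable {d : C →ₗ[ℂ] C} {D : (L.L ⊗[ℂ] A) ⊗[ℂ] C →ₗ[ℂ] (L.L ⊗[ℂ] A) ⊗[ℂ] C}
  {Br : (L.L ⊗[ℂ] A) ⊗[ℂ] C →ₗ[ℂ] (L.L ⊗[ℂ] A) ⊗[ℂ] C →ₗ[ℂ] (L.L ⊗[ℂ] A) ⊗[ℂ] C}

section

variable {e e' e'' : ℤ} {N N' N'' : Submodule ℂ A} {u v w : (L.L ⊗[ℂ] A) ⊗[ℂ] C}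

theorem IsTotalDifferential.map_mem (hD : IsTotalDifferential L A G d D)
    (hd : IsCDGA G d) (hv : v ∈ formsOfDegree L A G e N) :
    D v ∈ formsOfDegree L A G (e + 1) N := by
  induction hv using formsOfDegree_induction with
  | add v w _ _ hv hw => simpa only [map_add] using add_mem hv hw
  | tmul p q x a α hx ha hα he =>
    rw [hD p q x a α hx hα]
    exact add_mem (tmul_mem_formsOfDegree (L.d_mem p x hx) ha hα (by lia))
      (zsmul_mem (tmul_mem_formsOfDegree hx ha (hd.map_mem hα) (by push_cast; lia)) _)

theorem IsTotalDifferential.map_map (hD : IsTotalDifferential L A G d D)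
    (hd : IsCDGA G d) (hv : v ∈ formsOfDegree L A G e N) : D (D v) = 0 := by
  induction hv using formsOfDegree_induction with
  | add v w _ _ hv hw => rw [map_add, map_add, hv, hw, add_zero]
  | tmul p q x a α hx ha hα he =>
    rw [hD p q x a α hx hα, map_add, map_zsmul, hD _ q _ a α (L.d_mem p x hx) hα,
      hD p _ x a _ hx (hd.map_mem hα), L.d_sq, hd.map_map, ← neg_sgn, neg_zsmul]
    simp only [zero_tmul, tmul_zero, zsmul_zero, zero_add, add_zero, neg_add_cancel]

theorem IsTotalBracket.map_mem [GradedAlgebra G] (hBr : IsTotalBracket L A G Br)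
    (hN : ∀ a ∈ N, ∀ b ∈ N', a * b ∈ N'') (hu : u ∈ formsOfDegree L A G e N)
    (hv : v ∈ formsOfDegree L A G e' N') : Br u v ∈ formsOfDegree L A G (e + e') N'' := by
  induction hu using formsOfDegree_induction with
  | add u w _ _ hu hw => simpa only [map_add, LinearMap.add_apply] using add_mem hu hw
  | tmul p q x a α hx ha hα he =>
    induction hv using formsOfDegree_induction with
    | add v w _ _ hv hw => simpa only [map_add] using add_mem hv hw
    | tmul p' q' y b β hy hb hβ he' =>
      rw [hBr p p' q q' x y a b α β hx hy hα hβ]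
      exact zsmul_mem (tmul_mem_formsOfDegree (L.br_mem p p' x y hx hy) (hN a ha b hb)
        (SetLike.GradedMul.mul_mem hα hβ) (by push_cast; lia)) _

theorem IsTotalDifferential.leibniz_tmul [GradedAlgebra G] (hD : IsTotalDifferential L A G d D)
    (hd : IsCDGA G d) (hBr : IsTotalBracket L A G Br) {p p' : ℤ} {q q' : ℕ} {x y : L.L}
    {α β : C} (a b : A) (hx : x ∈ L.gr p) (hα : α ∈ G q) (hy : y ∈ L.gr p') (hβ : β ∈ G q') :
    D (Br ((x ⊗ₜ a) ⊗ₜ α) ((y ⊗ₜ b) ⊗ₜ β)) = Br (D ((x ⊗ₜ a) ⊗ₜ α)) ((y ⊗ₜ b) ⊗ₜ β) +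
      sgn (p + q) • Br ((x ⊗ₜ a) ⊗ₜ α) (D ((y ⊗ₜ b) ⊗ₜ β)) := by
  have hdx := L.d_mem p x hx
  have hdy := L.d_mem p' y hy
  have hdα := hd.map_mem hα
  have hdβ := hd.map_mem hβ
  rw [hBr p p' q q' x y a b α β hx hy hα hβ, map_zsmul,
    hD _ _ _ _ _ (L.br_mem p p' x y hx hy) (SetLike.GradedMul.mul_mem hα hβ),
    hD p q x a α hx hα, hD p' q' y b β hy hβ, L.leib p x y hx, hd.leibniz β hα,
    map_add, map_add, LinearMap.add_apply, map_zsmul_left, map_zsmul,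
    hBr _ _ _ _ _ _ _ _ _ _ hdx hy hα hβ, hBr _ _ _ _ _ _ _ _ _ _ hx hy hdα hβ,
    hBr _ _ _ _ _ _ _ _ _ _ hx hdy hα hβ, hBr _ _ _ _ _ _ _ _ _ _ hx hy hα hdβ]
  simp only [add_tmul, tmul_add, zsmul_tmul_tmul, tmul_tmul_zsmul, zsmul_add, smul_smul,
    neg_one_pow_eq_sgn, ← sgn_add]
  rw [sgn_congr (show Even (p + q + q * (p' + 1) - (q * p' + p)) from ⟨q, by ring⟩),
    show p + ↑(q + 1) * p' = q * p' + (p + p') by push_cast; ring,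
    show p + q + (p' + q * p') = q * p' + (p + p' + q) by ring]
  abel

theorem IsTotalDifferential.leibniz [GradedAlgebra G] (hD : IsTotalDifferential L A G d D)
    (hd : IsCDGA G d) (hBr : IsTotalBracket L A G Br) (hu : u ∈ formsOfDegree L A G e N)
    (hv : v ∈ formsOfDegree L A G e' N') : D (Br u v) = Br (D u) v + sgn e • Br u (D v) := by
  induction hu using formsOfDegree_induction with
  | add u w _ _ hu hw => simp only [map_add, LinearMap.add_apply, hu, hw, zsmul_add]; abel
  | tmul p q x a α hx _ hα he =>
    induction hv using formsOfDegree_induction with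
    | add v w _ _ hv hw => simp only [map_add, hv, hw, zsmul_add]; abel
    | tmul p' q' y b β hy _ hβ _ => exact he ▸ hD.leibniz_tmul hd hBr a b hx hα hy hβ

theorem IsTotalBracket.skew_tmul (hBr : IsTotalBracket L A G Br)
    (hd : IsCDGA G d) {p p' : ℤ} {q q' : ℕ} {x y : L.L} {α β : C} (a b : A) (hx : x ∈ L.gr p)
    (hα : α ∈ G q) (hy : y ∈ L.gr p') (hβ : β ∈ G q') :
    Br ((x ⊗ₜ a) ⊗ₜ α) ((y ⊗ₜ b) ⊗ₜ β) =
      -(sgn ((p + q) * (p' + q')) • Br ((y ⊗ₜ b) ⊗ₜ β) ((x ⊗ₜ a) ⊗ₜ α)) := by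
  rw [hBr p p' q q' x y a b α β hx hy hα hβ, hBr p' p q' q y x b a β α hy hx hβ hα,
    L.skew p p' x y hx hy, hd.gcomm hα hβ, mul_comm a b]
  simp only [neg_tmul, zsmul_tmul_tmul, tmul_tmul_zsmul, zsmul_neg, smul_smul,
    neg_one_pow_eq_sgn, ← sgn_add]
  rw [sgn_congr (m := (p + q) * (p' + q') + q' * p) (n := q * p' + (↑(q * q') + p * p'))
    ⟨p * q', by push_cast; ring⟩]

theorem IsTotalBracket.skew (hBr : IsTotalBracket L A G Br)
    (hd : IsCDGA G d) (hu : u ∈ formsOfDegree L A G e N)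
    (hv : v ∈ formsOfDegree L A G e' N') : Br u v = -(sgn (e * e') • Br v u) := by
  induction hu using formsOfDegree_induction with
  | add u w _ _ hu hw => simp only [map_add, LinearMap.add_apply, hu, hw, zsmul_add, neg_add]
  | tmul p q x a α hx _ hα he =>
    induction hv using formsOfDegree_induction with
    | add v w _ _ hv hw => simp only [map_add, LinearMap.add_apply, hv, hw, zsmul_add, neg_add]
    | tmul p' q' y b β hy _ hβ he' => exact he ▸ he' ▸ hBr.skew_tmul hd a b hx hα hy hβ

theorem IsTotalBracket.jacobi_tmul [GradedAlgebra G] (hBr : IsTotalBracket L A G Br)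
    (hd : IsCDGA G d) {p p' p'' : ℤ} {q q' q'' : ℕ} {x y z : L.L} {α β γ : C} (a b c : A)
    (hx : x ∈ L.gr p) (hα : α ∈ G q) (hy : y ∈ L.gr p') (hβ : β ∈ G q') (hz : z ∈ L.gr p'')
    (hγ : γ ∈ G q'') :
    Br ((x ⊗ₜ a) ⊗ₜ α) (Br ((y ⊗ₜ b) ⊗ₜ β) ((z ⊗ₜ c) ⊗ₜ γ)) =
      Br (Br ((x ⊗ₜ a) ⊗ₜ α) ((y ⊗ₜ b) ⊗ₜ β)) ((z ⊗ₜ c) ⊗ₜ γ) +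
        sgn ((p + q) * (p' + q')) •
          Br ((y ⊗ₜ b) ⊗ₜ β) (Br ((x ⊗ₜ a) ⊗ₜ α) ((z ⊗ₜ c) ⊗ₜ γ)) := by
  rw [hBr _ _ _ _ _ _ _ _ _ _ hx hy hα hβ, hBr _ _ _ _ _ _ _ _ _ _ hx hz hα hγ,
    hBr _ _ _ _ _ _ _ _ _ _ hy hz hβ hγ, map_zsmul_left, map_zsmul, map_zsmul,
    hBr _ _ _ _ _ _ _ _ _ _ hx (L.br_mem p' p'' y z hy hz) hα (SetLike.GradedMul.mul_mem hβ hγ),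
    hBr _ _ _ _ _ _ _ _ _ _ (L.br_mem p p' x y hx hy) hz (SetLike.GradedMul.mul_mem hα hβ) hγ,
    hBr _ _ _ _ _ _ _ _ _ _ hy (L.br_mem p p'' x z hx hz) hβ (SetLike.GradedMul.mul_mem hα hγ),
    L.jacobi p p' x y z hx hy, ← mul_assoc β α γ, hd.gcomm hβ hα, smul_mul_assoc,
    mul_assoc α β γ, mul_left_comm b a c, mul_assoc a b c]
  simp only [add_tmul, zsmul_tmul_tmul, tmul_tmul_zsmul, zsmul_add, smul_smul,
    neg_one_pow_eq_sgn, ← sgn_add]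
  rw [sgn_congr (m := (p + q) * (p' + q') + (q * p'' + (q' * (p + p'') + ↑(q' * q))))
      (n := q' * p'' + (q * (p' + p'') + p * p')) ⟨p * q' + q * q', by push_cast; ring⟩,
    show q * p' + ↑(q + q') * p'' = q' * p'' + q * (p' + p'') by push_cast; ring]

theorem IsTotalBracket.jacobi [GradedAlgebra G] (hBr : IsTotalBracket L A G Br)
    (hd : IsCDGA G d) (hu : u ∈ formsOfDegree L A G e N) (hv : v ∈ formsOfDegree L A G e' N')
    (hw : w ∈ formsOfDegree L A G e'' N'') :
    Br u (Br v w) = Br (Br u v) w + sgn (e * e') • Br v (Br u w) := by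
  induction hu using formsOfDegree_induction with
  | add u u' _ _ hu hu' => simp only [map_add, LinearMap.add_apply, hu, hu', zsmul_add]; abel
  | tmul p q x a α hx _ hα he =>
    induction hv using formsOfDegree_induction with
    | add v v' _ _ hv hv' => simp only [map_add, LinearMap.add_apply, hv, hv', zsmul_add]; abel
    | tmul p' q' y b β hy _ hβ he' =>
      induction hw using formsOfDegree_induction with
      | add w w' _ _ hw hw' => simp only [map_add, hw, hw', zsmul_add]; abel
      | tmul p'' q'' z c γ hz _ hγ _ =>
        exact he ▸ he' ▸ hBr.jacobi_tmul hd a b c hx hα hy hβ hz hγ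

end

theorem isFilteredDGLA_formsOfDegree [GradedAlgebra G] (hd : IsCDGA G d)
    (hD : IsTotalDifferential L A G d D) (hBr : IsTotalBracket L A G Br) (I : Ideal A) :
    IsFilteredDGLA (fun p i => formsOfDegree L A G p ((I ^ i).restrictScalars ℂ)) D Br where
  antitone p _ _ hij := formsOfDegree_mono p (Ideal.pow_le_pow_right hij)
  d_mem := hD.map_mem hd
  br_mem := hBr.map_mem fun _ ha _ hb => pow_add I _ _ ▸ Ideal.mul_mem_mul ha hb
  d_d := hD.map_map hd
  d_br := hD.leibniz hd hBr
  skew := hBr.skew hd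
  jacobi := hBr.jacobi hd

section Naturality

variable {d' : C' →ₗ[ℂ] C'} {f : C →ₐ[ℂ] C'}
  {D' : (L.L ⊗[ℂ] A) ⊗[ℂ] C' →ₗ[ℂ] (L.L ⊗[ℂ] A) ⊗[ℂ] C'}
  {Br' : (L.L ⊗[ℂ] A) ⊗[ℂ] C' →ₗ[ℂ] (L.L ⊗[ℂ] A) ⊗[ℂ] C' →ₗ[ℂ] (L.L ⊗[ℂ] A) ⊗[ℂ] C'}
  {e e' : ℤ} {N N' : Submodule ℂ A} {u v : (L.L ⊗[ℂ] A) ⊗[ℂ] C}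

theorem IsTotalDifferential.lTensor_map (hD : IsTotalDifferential L A G d D)
    (hD' : IsTotalDifferential L A G' d' D') (hf : IsDGAHom G d G' d' f)
    (hv : v ∈ formsOfDegree L A G e N) :
    f.toLinearMap.lTensor (L.L ⊗[ℂ] A) (D v) = D' (f.toLinearMap.lTensor (L.L ⊗[ℂ] A) v) := by
  induction hv using formsOfDegree_induction with
  | add v w _ _ hv hw => simp only [map_add, hv, hw]
  | tmul p q x a α hx ha hα he =>
    rw [hD p q x a α hx hα, map_add, map_zsmul, LinearMap.lTensor_tmul, LinearMap.lTensor_tmul,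
      LinearMap.lTensor_tmul, AlgHom.toLinearMap_apply, AlgHom.toLinearMap_apply,
      hD' p q x a (f α) hx (hf.map_mem q α hα), hf.map_d]

theorem IsTotalBracket.lTensor_map (hBr : IsTotalBracket L A G Br)
    (hBr' : IsTotalBracket L A G' Br') (hf : ∀ q, ∀ α ∈ G q, f α ∈ G' q)
    (hu : u ∈ formsOfDegree L A G e N) (hv : v ∈ formsOfDegree L A G e' N') :
    f.toLinearMap.lTensor (L.L ⊗[ℂ] A) (Br u v) =
      Br' (f.toLinearMap.lTensor (L.L ⊗[ℂ] A) u) (f.toLinearMap.lTensor (L.L ⊗[ℂ] A) v) := by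
  induction hu using formsOfDegree_induction with
  | add u w _ _ hu hw => simp only [map_add, LinearMap.add_apply, hu, hw]
  | tmul p q x a α hx _ hα _ =>
    induction hv using formsOfDegree_induction with
    | add v w _ _ hv hw => simp only [map_add, hv, hw]
    | tmul p' q' y b β hy _ hβ _ =>
      simp only [hBr p p' q q' x y a b α β hx hy hα hβ, map_zsmul, LinearMap.lTensor_tmul,
        AlgHom.toLinearMap_apply, map_mul,
        hBr' p p' q q' x y a b _ _ hx hy (hf q α hα) (hf q' β hβ)]

theorem isDGIdeal_ker_lTensor (hD : IsTotalDifferential L A G d D)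
    (hD' : IsTotalDifferential L A G' d' D') (hBr : IsTotalBracket L A G Br)
    (hBr' : IsTotalBracket L A G' Br') (hf : IsDGAHom G d G' d' f) (I : Ideal A) :
    IsDGIdeal (fun p i => formsOfDegree L A G p ((I ^ i).restrictScalars ℂ)) D Br
      (LinearMap.ker (f.toLinearMap.lTensor (L.L ⊗[ℂ] A))) where
  d_mem hv hker := by
    rw [LinearMap.mem_ker, hD.lTensor_map hD' hf hv, LinearMap.mem_ker.mp hker, map_zero]
  br_mem hv hw hker := by
    rw [LinearMap.mem_ker, hBr.lTensor_map hBr' hf.map_mem hv hw, LinearMap.mem_ker.mp hker,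
      map_zero]

theorem lTensor_curvature (hD : IsTotalDifferential L A G d D)
    (hD' : IsTotalDifferential L A G' d' D') (hBr : IsTotalBracket L A G Br)
    (hBr' : IsTotalBracket L A G' Br') (hf : IsDGAHom G d G' d' f)
    (hv : v ∈ formsOfDegree L A G e N) :
    f.toLinearMap.lTensor (L.L ⊗[ℂ] A) (curvature D Br v) =
      curvature D' Br' (f.toLinearMap.lTensor (L.L ⊗[ℂ] A) v) := by
  rw [curvature, curvature, map_add, map_smul, hD.lTensor_map hD' hf hv,
    hBr.lTensor_map hBr' hf.map_mem hv hv]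

end Naturality

end TensorDGLA

namespace IsPolyDeRham

variable {L : GradedDGLA} {A : Type} [CommRing A] [Algebra ℂ A] {n : ℕ} {Ω : SimplexForms n}
  (hΩ : IsPolyDeRham Ω)

theorem lTensor_poincare_mem (k : Fin (n + 1)) {p : ℤ} {N : Submodule ℂ A}
    {v : (L.L ⊗[ℂ] A) ⊗[ℂ] Ω.A} (hv : v ∈ formsOfDegree L A Ω.grading (p + 1) N) :
    (hΩ.poincare k).lTensor (L.L ⊗[ℂ] A) v ∈ formsOfDegree L A Ω.grading p N := by
  induction hv using formsOfDegree_induction with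
  | add v w _ _ hv hw => simpa only [map_add] using add_mem hv hw
  | tmul p' q x a α hx ha hα hd =>
    have hmem := hΩ.poincare_mem k hα
    rw [LinearMap.lTensor_tmul]
    cases q with
    | zero =>
      have hzero : hΩ.poincare k α = 0 := hmem
      rw [hzero, tmul_zero]
      exact zero_mem _
    | succ q => exact tmul_mem_formsOfDegree hx ha hmem (by push_cast at hd; lia)

theorem d_lTensor_poincare_sub {D : (L.L ⊗[ℂ] A) ⊗[ℂ] Ω.A →ₗ[ℂ] (L.L ⊗[ℂ] A) ⊗[ℂ] Ω.A}
    (hD : IsTotalDifferential L A Ω.grading Ω.d D) (k : Fin (n + 1)) {p : ℤ} {N : Submodule ℂ A}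
    {v : (L.L ⊗[ℂ] A) ⊗[ℂ] Ω.A} (hv : v ∈ formsOfDegree L A Ω.grading p N) :
    D ((hΩ.poincare k).lTensor (L.L ⊗[ℂ] A) v) - (hΩ.poincare k).lTensor (L.L ⊗[ℂ] A) (D v) =
      sgn p • (v -
        (hΩ.pullback Ω (Function.const _ k)).toLinearMap.lTensor (L.L ⊗[ℂ] A) v) := by
  induction hv using formsOfDegree_induction with
  | add v w _ _ hv hw =>
    simp only [map_add, add_sub_add_comm, hv, hw, zsmul_add]
  | tmul p' q x a α hx _ hα hd =>
    obtain ⟨q', hq'⟩ : ∃ q', hΩ.poincare k α ∈ Ω.grading q' := by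
      cases q with
      | zero =>
        have hzero : hΩ.poincare k α = 0 := hΩ.poincare_mem k hα
        exact ⟨0, hzero ▸ zero_mem _⟩
      | succ q => exact ⟨q, hΩ.poincare_mem k hα⟩
    rw [LinearMap.lTensor_tmul, LinearMap.lTensor_tmul, hD p' q' x a _ hx hq',
      hD p' q x a α hx hα, map_add, map_zsmul, LinearMap.lTensor_tmul, LinearMap.lTensor_tmul,
      add_sub_add_left_eq_sub, ← zsmul_sub, ← tmul_sub, hΩ.d_poincare_sub k hα, tmul_tmul_zsmul,
      tmul_sub, smul_smul, neg_one_pow_eq_sgn, ← sgn_add, hd, AlgHom.toLinearMap_apply]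

end IsPolyDeRham

section SymmetricSimplicial

/-- A symmetric simplicial abelian group: a contravariant functor from the nonempty finite
ordinals and *all* maps between them to abelian groups. Its value on `[n] = Fin (n + 1)`
is `X n`. -/
structure SymmetricSimplicialAddGroup (X : ℕ → Type*) [∀ n, AddCommGroup (X n)] where
  map {m n : ℕ} (a : Fin (n + 1) → Fin (m + 1)) : X m →+ X n
  map_id {n : ℕ} (x : X n) : map id x = x
  map_map {l m n : ℕ} (a : Fin (m + 1) → Fin (l + 1)) (b : Fin (n + 1) → Fin (m + 1)) (x : X l) :
    map b (map a x) = map (a ∘ b) x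

theorem exists_succAbove_comp_eq {n : ℕ} {ι : Type*} (i : Fin (n + 1))
    (g : ι → Fin (n + 1)) (hg : ∀ v, g v ≠ i) : ∃ b : ι → Fin n, i.succAbove ∘ b = g :=
  ⟨fun v => (Fin.exists_succAbove_eq (hg v)).choose,
    funext fun v => (Fin.exists_succAbove_eq (hg v)).choose_spec⟩

theorem exists_factor_of_succAbove_comp_eq {n : ℕ} {ι : Type*} {j : Fin (n + 2)} {l : Fin (n + 1)}
    {a b : ι → Fin (n + 1)} (hab : (j.succAbove l).succAbove ∘ a = j.succAbove ∘ b) :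
    ∃ c : ι → Fin n, a = (l.predAbove j).succAbove ∘ c ∧ b = l.succAbove ∘ c := by
  obtain ⟨c, hc⟩ := exists_succAbove_comp_eq l b fun v hv => by
    have h := congrFun hab v
    rw [Function.comp_apply, Function.comp_apply, hv] at h
    exact Fin.succAbove_ne _ _ h
  refine ⟨c, funext fun v => Fin.succAbove_right_injective (p := j.succAbove l) ?_, hc.symm⟩
  rw [Function.comp_apply, Fin.succAbove_succAbove_succAbove_predAbove]
  subst hc
  exact congrFun hab v

namespace SymmetricSimplicialAddGroup

variable {X : ℕ → Type*} [∀ n, AddCommGroup (X n)] (G : SymmetricSimplicialAddGroup X) {n : ℕ}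

/-- Compatibility of a family of simplices `ψ i`, the prospective faces other than the `k`-th one:
any two of them agree wherever the corresponding faces of the simplex overlap. -/
def IsHorn (k : Fin (n + 2)) (ψ : ∀ i, i ≠ k → X n) : Prop :=
  ∀ (i j : Fin (n + 2)) (hi : i ≠ k) (hj : j ≠ k), i ≠ j →
    ∀ {m : ℕ} (a b : Fin (m + 1) → Fin (n + 1)), i.succAbove ∘ a = j.succAbove ∘ b →
      G.map a (ψ i hi) = G.map b (ψ j hj)

variable {G}

theorem isHorn_of_face_eq {k : Fin (n + 3)} {ψ : ∀ i, i ≠ k → X (n + 1)}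
    (hψ : ∀ (i j : Fin (n + 3)) (hi : i ≠ k) (hj : j ≠ k) (hij : i < j),
      G.map (i.castPred (Fin.ne_last_of_lt hij)).succAbove (ψ j hj) =
        G.map (j.pred (Fin.ne_zero_of_lt hij)).succAbove (ψ i hi)) :
    G.IsHorn k ψ := by
  have of_lt : ∀ (i j : Fin (n + 3)) (hi : i ≠ k) (hj : j ≠ k), i < j →
      ∀ {m : ℕ} (a b : Fin (m + 1) → Fin (n + 2)), i.succAbove ∘ a = j.succAbove ∘ b →
        G.map a (ψ i hi) = G.map b (ψ j hj) := by
    intro i j hi hj hij m a b hab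
    rw [← Fin.succAbove_castPred_of_lt j i hij] at hab
    obtain ⟨c, rfl, rfl⟩ := exists_factor_of_succAbove_comp_eq hab
    rw [Fin.predAbove_castPred_of_lt i j hij, ← G.map_map, ← G.map_map, hψ i j hi hj hij]
  intro i j hi hj hij m a b hab
  rcases lt_or_gt_of_ne hij with h | h
  · exact of_lt i j hi hj h a b hab
  · exact (of_lt j i hj hi h b a hab.symm).symm

theorem IsHorn.exists_add_degenerate {k : Fin (n + 2)} {ψ : ∀ i, i ≠ k → X n} (hψ : G.IsHorn k ψ)
    (φ : X (n + 1)) {i : Fin (n + 2)} (hi : i ≠ k) :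
    ∃ φ' : X (n + 1), G.map i.succAbove φ' = ψ i hi ∧
      ∀ j (hj : j ≠ k), G.map j.succAbove φ = ψ j hj → G.map j.succAbove φ' = ψ j hj := by
  obtain ⟨r, hr⟩ := exists_succAbove_comp_eq i (fun v => if v = i then k else v) fun v => by
    split_ifs with hv
    exacts [hi.symm, hv]
  have hr_section : r ∘ i.succAbove = id := funext fun v =>
    Fin.succAbove_right_injective (p := i) <| by
      simpa only [Function.comp_apply, Fin.succAbove_ne, if_false, id] using
        congrFun hr (i.succAbove v)
  refine ⟨φ + G.map r (ψ i hi - G.map i.succAbove φ), ?_, fun j hj hφj => ?_⟩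
  · rw [map_add, G.map_map, hr_section, G.map_id, add_sub_cancel]
  rcases eq_or_ne i j with rfl | hij
  · rw [hφj, sub_self, map_zero, add_zero, hφj]
  obtain ⟨b, hb⟩ := exists_succAbove_comp_eq j (i.succAbove ∘ r ∘ j.succAbove) fun v => by
    rw [← Function.comp_assoc, hr, Function.comp_apply]
    split_ifs
    exacts [hj.symm, Fin.succAbove_ne j v]
  rw [map_add, G.map_map, map_sub, hψ i j hi hj hij _ b hb.symm, G.map_map, ← hb, ← G.map_map, hφj,
    sub_self, add_zero]

theorem IsHorn.exists_filler {k : Fin (n + 2)} {ψ : ∀ i, i ≠ k → X n} (hψ : G.IsHorn k ψ) :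
    ∃ φ : X (n + 1), ∀ i (hi : i ≠ k), G.map i.succAbove φ = ψ i hi := by
  suffices ∀ S : Finset (Fin (n + 2)),
      ∃ φ : X (n + 1), ∀ i ∈ S, ∀ hi : i ≠ k, G.map i.succAbove φ = ψ i hi by
    simpa only [Finset.mem_univ, forall_const] using this Finset.univ
  intro S
  induction S using Finset.induction_on with
  | empty => exact ⟨0, fun i hi => absurd hi (Finset.notMem_empty i)⟩
  | insert i S _ ih =>
    obtain ⟨φ, hφ⟩ := ih
    by_cases hik : i = k
    · exact ⟨φ, (Finset.forall_mem_insert _ _ _).mpr ⟨fun hi => absurd hik hi, hφ⟩⟩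
    obtain ⟨φ', hφ'i, hφ'⟩ := hψ.exists_add_degenerate φ hik
    exact ⟨φ', (Finset.forall_mem_insert _ _ _).mpr
      ⟨fun _ => hφ'i, fun j hj hjk => hφ' j hjk (hφ j hj hjk)⟩⟩

end SymmetricSimplicialAddGroup

end SymmetricSimplicial

section Horn

theorem IsDGIdeal.iInf {𝕜 V ι : Type*} [Field 𝕜] [AddCommGroup V] [Module 𝕜 V]
    {W : ℤ → ℕ → Submodule 𝕜 V} {D : V →ₗ[𝕜] V} {Br : V →ₗ[𝕜] V →ₗ[𝕜] V} {K : ι → Submodule 𝕜 V}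
    (hK : ∀ i, IsDGIdeal W D Br (K i)) : IsDGIdeal W D Br (⨅ i, K i) where
  d_mem hv hvK := Submodule.mem_iInf _ |>.mpr fun i =>
    (hK i).d_mem hv (Submodule.mem_iInf _ |>.mp hvK i)
  br_mem hv hw hwK := Submodule.mem_iInf _ |>.mpr fun i =>
    (hK i).br_mem hv hw (Submodule.mem_iInf _ |>.mp hwK i)

namespace IsPolyDeRham

variable {n : ℕ} {Ω : SimplexForms (n + 1)} (hΩ : IsPolyDeRham Ω) (Ω' : SimplexForms n)

/-- The forms on a simplex with coefficients in `V` which vanish on the horn at the `k`-th vertex,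
that is, on all faces but the `k`-th one. -/
noncomputable def hornIdeal (V : Type*) [AddCommGroup V] [Module ℂ V] (k : Fin (n + 2)) :
    Submodule ℂ (V ⊗[ℂ] Ω.A) :=
  ⨅ i : {i // i ≠ k}, LinearMap.ker ((hΩ.pullback Ω' i.1.succAbove).toLinearMap.lTensor V)

variable {Ω'} in
theorem mem_hornIdeal {V : Type*} [AddCommGroup V] [Module ℂ V] {k : Fin (n + 2)}
    {v : V ⊗[ℂ] Ω.A} : v ∈ hΩ.hornIdeal Ω' V k ↔
      ∀ i ≠ k, (hΩ.pullback Ω' i.succAbove).toLinearMap.lTensor V v = 0 := by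
  simp only [hornIdeal, Submodule.mem_iInf, LinearMap.mem_ker, Subtype.forall]

variable {Ω'} (hΩ' : IsPolyDeRham Ω') {V : Type*} [AddCommGroup V] [Module ℂ V] {k : Fin (n + 2)}
  {v : V ⊗[ℂ] Ω.A}

include hΩ' in
theorem lTensor_poincare_mem_hornIdeal (hv : v ∈ hΩ.hornIdeal Ω' V k) :
    (hΩ.poincare k).lTensor V v ∈ hΩ.hornIdeal Ω' V k := by
  rw [mem_hornIdeal] at hv ⊢
  intro i hi
  obtain ⟨l, rfl⟩ := Fin.exists_succAbove_eq hi.symm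
  have hcomm : (hΩ.pullback Ω' i.succAbove).toLinearMap ∘ₗ hΩ.poincare (i.succAbove l) =
      hΩ'.poincare l ∘ₗ (hΩ.pullback Ω' i.succAbove).toLinearMap :=
    LinearMap.ext (hΩ.pullback_poincare hΩ' _ l)
  rw [← LinearMap.lTensor_comp_apply, hcomm, LinearMap.lTensor_comp_apply, hv i hi, map_zero]

include hΩ' in
theorem lTensor_pullback_const_of_mem_hornIdeal (hv : v ∈ hΩ.hornIdeal Ω' V k) :
    (hΩ.pullback Ω (Function.const _ k)).toLinearMap.lTensor V v = 0 := by
  obtain ⟨i, hi⟩ := exists_ne k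
  obtain ⟨l, rfl⟩ := Fin.exists_succAbove_eq hi.symm
  have hfactor : hΩ.pullback Ω (Function.const _ (i.succAbove l)) =
      (hΩ'.pullback Ω (Function.const _ l)).comp (hΩ.pullback Ω' i.succAbove) :=
    (hΩ.pullback_comp hΩ' Ω i.succAbove (Function.const _ l)).symm
  rw [hfactor, AlgHom.comp_toLinearMap, LinearMap.lTensor_comp_apply,
    hΩ.mem_hornIdeal.mp hv i hi, map_zero]

end IsPolyDeRham

variable {L : GradedDGLA} {A : Type} [CommRing A] [Algebra ℂ A] {n : ℕ}

section

variable {Ω : SimplexForms (n + 1)} {Ω' : SimplexForms n} (hΩ : IsPolyDeRham Ω)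
  {D : (L.L ⊗[ℂ] A) ⊗[ℂ] Ω.A →ₗ[ℂ] (L.L ⊗[ℂ] A) ⊗[ℂ] Ω.A}
  (hD : IsTotalDifferential L A Ω.grading Ω.d D)
include hΩ hD

theorem isContraction_poincare (hΩ' : IsPolyDeRham Ω') (I : Ideal A) (k : Fin (n + 2)) :
    IsContraction (fun p i => formsOfDegree L A Ω.grading p ((I ^ i).restrictScalars ℂ)) D
      (hΩ.hornIdeal Ω' (L.L ⊗[ℂ] A) k) ((hΩ.poincare k).lTensor (L.L ⊗[ℂ] A)) where
  map_mem := hΩ.lTensor_poincare_mem k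
  map_mem_ideal := hΩ.lTensor_poincare_mem_hornIdeal hΩ'
  d_map_sub hv hvK := by
    rw [hΩ.d_lTensor_poincare_sub hD k hv, hΩ.lTensor_pullback_const_of_mem_hornIdeal hΩ' hvK,
      sub_zero]

variable {D' : (L.L ⊗[ℂ] A) ⊗[ℂ] Ω'.A →ₗ[ℂ] (L.L ⊗[ℂ] A) ⊗[ℂ] Ω'.A}
  {Br : (L.L ⊗[ℂ] A) ⊗[ℂ] Ω.A →ₗ[ℂ] (L.L ⊗[ℂ] A) ⊗[ℂ] Ω.A →ₗ[ℂ] (L.L ⊗[ℂ] A) ⊗[ℂ] Ω.A}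
  {Br' : (L.L ⊗[ℂ] A) ⊗[ℂ] Ω'.A →ₗ[ℂ] (L.L ⊗[ℂ] A) ⊗[ℂ] Ω'.A →ₗ[ℂ] (L.L ⊗[ℂ] A) ⊗[ℂ] Ω'.A}

theorem isDGIdeal_hornIdeal (hD' : IsTotalDifferential L A Ω'.grading Ω'.d D')
    (hBr : IsTotalBracket L A Ω.grading Br) (hBr' : IsTotalBracket L A Ω'.grading Br')
    (I : Ideal A) (k : Fin (n + 2)) :
    IsDGIdeal (fun p i => formsOfDegree L A Ω.grading p ((I ^ i).restrictScalars ℂ)) D Br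
      (hΩ.hornIdeal Ω' (L.L ⊗[ℂ] A) k) :=
  .iInf fun i => isDGIdeal_ker_lTensor hD hD' hBr hBr'
    (hΩ.pullbackProp_pullback Ω' i.1.succAbove).isDGAHom I

theorem exists_curvature_eq_zero_of_faces (hΩ' : IsPolyDeRham Ω')
    (hD' : IsTotalDifferential L A Ω'.grading Ω'.d D')
    (hBr : IsTotalBracket L A Ω.grading Br) (hBr' : IsTotalBracket L A Ω'.grading Br')
    {I : Ideal A} (hI : IsNilpotent I) (k : Fin (n + 2)) {φ : (L.L ⊗[ℂ] A) ⊗[ℂ] Ω.A}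
    (hφ : φ ∈ formsOfDegree L A Ω.grading 1 (I.restrictScalars ℂ))
    (hfaces : ∀ i ≠ k, curvature D' Br'
      ((hΩ.pullback Ω' i.succAbove).toLinearMap.lTensor (L.L ⊗[ℂ] A) φ) = 0) :
    ∃ ψ ∈ formsOfDegree L A Ω.grading 1 (I.restrictScalars ℂ), curvature D Br ψ = 0 ∧
      ∀ i ≠ k, (hΩ.pullback Ω' i.succAbove).toLinearMap.lTensor (L.L ⊗[ℂ] A) ψ =
        (hΩ.pullback Ω' i.succAbove).toLinearMap.lTensor (L.L ⊗[ℂ] A) φ := by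
  obtain ⟨N, hN⟩ := hI
  rw [← pow_one I] at hφ ⊢
  have hcurv : curvature D Br φ ∈ hΩ.hornIdeal Ω' (L.L ⊗[ℂ] A) k :=
    hΩ.mem_hornIdeal.mpr fun i hi => by
      rw [lTensor_curvature hD hD' hBr hBr' (hΩ.pullbackProp_pullback Ω' _).isDGAHom hφ,
        hfaces i hi]
  have hbot : formsOfDegree L A Ω.grading 2 ((I ^ N).restrictScalars ℂ) = ⊥ := by
    rw [hN, Submodule.zero_eq_bot, Submodule.restrictScalars_bot, formsOfDegree_bot]
  obtain ⟨ψ, hψ, hsub, hψ0⟩ :=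
    (isFilteredDGLA_formsOfDegree Ω.isCDGA hD hBr I).exists_curvature_eq_zero
      (isDGIdeal_hornIdeal hΩ hD hD' hBr hBr' I k) (isContraction_poincare hΩ hD hΩ' I k)
      hbot hφ hcurv
  refine ⟨ψ, hψ, hψ0, fun i hi => ?_⟩
  have := hΩ.mem_hornIdeal.mp hsub i hi
  rwa [map_sub, sub_eq_zero, eq_comm] at this

end

/-- The elements of `L ⊗ N ⊗ A^*(Δ_n)` of total degree `p`, for varying `n`, form a symmetric
simplicial abelian group because forms pull back along all affine maps of simplices. -/
noncomputable def simplicialForms (L : GradedDGLA) (A : Type) [CommRing A] [Algebra ℂ A]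
    {F : ∀ n, SimplexForms n} (hF : ∀ n, IsPolyDeRham (F n)) (p : ℤ) (N : Submodule ℂ A) :
    SymmetricSimplicialAddGroup fun n => formsOfDegree L A (F n).grading p N where
  map {m n} a := ((((hF m).pullback (F n) a).toLinearMap.lTensor (L.L ⊗[ℂ] A)).restrict
    fun _ hv => lTensor_mem_formsOfDegree
      ((hF m).pullbackProp_pullback (F n) a).isDGAHom.map_mem hv).toAddMonoidHom
  map_id {n} x := Subtype.ext <| by
    change ((hF n).pullback (F n) id).toLinearMap.lTensor (L.L ⊗[ℂ] A) x = x
    rw [(hF n).pullback_id, AlgHom.toLinearMap_id, LinearMap.lTensor_id, LinearMap.id_apply]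
  map_map {l m n} a b x := Subtype.ext <| by
    change ((hF m).pullback (F n) b).toLinearMap.lTensor (L.L ⊗[ℂ] A)
        (((hF l).pullback (F m) a).toLinearMap.lTensor (L.L ⊗[ℂ] A) x) =
      ((hF l).pullback (F n) (a ∘ b)).toLinearMap.lTensor (L.L ⊗[ℂ] A) x
    rw [← LinearMap.lTensor_comp_apply, ← AlgHom.comp_toLinearMap, (hF l).pullback_comp]

end Horn

section Kan

variable {F : ∀ n, SimplexForms n} (hF : ∀ n, IsPolyDeRham (F n)) {L : GradedDGLA} {A : Type}
  [CommRing A] [Algebra ℂ A] {I : Ideal A}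
  {D : ∀ n, (L.L ⊗[ℂ] A) ⊗[ℂ] (F n).A →ₗ[ℂ] (L.L ⊗[ℂ] A) ⊗[ℂ] (F n).A}
  {Br : ∀ n, (L.L ⊗[ℂ] A) ⊗[ℂ] (F n).A →ₗ[ℂ]
    (L.L ⊗[ℂ] A) ⊗[ℂ] (F n).A →ₗ[ℂ] (L.L ⊗[ℂ] A) ⊗[ℂ] (F n).A}

theorem exists_isMCsimp_of_isHorn (hI : IsNilpotent I)
    (hD : ∀ n, IsTotalDifferential L A (F n).grading (F n).d (D n))
    (hBr : ∀ n, IsTotalBracket L A (F n).grading (Br n)) {n : ℕ} {k : Fin (n + 2)}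
    {ψ : ∀ i, i ≠ k → (L.L ⊗[ℂ] A) ⊗[ℂ] (F n).A}
    (hψ : ∀ i hi, IsMCsimp F L A (I.restrictScalars ℂ) D Br n (ψ i hi))
    (hhorn : (simplicialForms L A hF 1 (I.restrictScalars ℂ)).IsHorn k
      fun i hi => ⟨ψ i hi, (hψ i hi).1⟩) :
    ∃ φ, IsMCsimp F L A (I.restrictScalars ℂ) D Br (n + 1) φ ∧
      ∀ i hi, ((hF (n + 1)).pullback (F n) i.succAbove).toLinearMap.lTensor (L.L ⊗[ℂ] A) φ =
        ψ i hi := by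
  obtain ⟨⟨φ₀, hφ₀⟩, hface⟩ := hhorn.exists_filler
  replace hface : ∀ i hi, ((hF (n + 1)).pullback (F n) i.succAbove).toLinearMap.lTensor
      (L.L ⊗[ℂ] A) φ₀ = ψ i hi := fun i hi => congrArg Subtype.val (hface i hi)
  obtain ⟨φ, hφ, hcurv, hφ_face⟩ := exists_curvature_eq_zero_of_faces (hF (n + 1)) (hD (n + 1))
    (hF n) (hD n) (hBr (n + 1)) (hBr n) hI k hφ₀ fun i hi => hface i hi ▸ (hψ i hi).2
  exact ⟨φ, ⟨hφ, hcurv⟩, fun i hi => (hφ_face i hi).trans (hface i hi)⟩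

end Kan

theorem mc_simplicial_kan_general
    (F : ∀ k, SimplexForms k) (hF : ∀ k, IsPolyDeRham (F k))
    (pb : ∀ k : ℕ, Fin (k + 2) → (F (k + 1)).A →ₐ[ℂ] (F k).A)
    (hpb : ∀ (k : ℕ) (i : Fin (k + 2)),
      PullbackProp (F (k + 1)) (F k) (Fin.succAbove i) (pb k i))
    (L : GradedDGLA)
    (A : Type) [CommRing A] [Algebra ℂ A] {I : Ideal A} (hI : IsNilpotent I)
    (D : ∀ k, (L.L ⊗[ℂ] A) ⊗[ℂ] (F k).A →ₗ[ℂ] (L.L ⊗[ℂ] A) ⊗[ℂ] (F k).A)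
    (hD : ∀ k, IsTotalDifferential L A (F k).grading (F k).d (D k))
    (Br : ∀ k, (L.L ⊗[ℂ] A) ⊗[ℂ] (F k).A →ₗ[ℂ]
      (L.L ⊗[ℂ] A) ⊗[ℂ] (F k).A →ₗ[ℂ] (L.L ⊗[ℂ] A) ⊗[ℂ] (F k).A)
    (hBr : ∀ k, IsTotalBracket L A (F k).grading (Br k)) :
    (∀ (k : Fin 2) (ψ : ∀ i : Fin 2, i ≠ k → (L.L ⊗[ℂ] A) ⊗[ℂ] (F 0).A),
      (∀ (i : Fin 2) (hi : i ≠ k),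
        IsMCsimp F L A (I.restrictScalars ℂ) D Br 0 (ψ i hi)) →
      ∃ φ : (L.L ⊗[ℂ] A) ⊗[ℂ] (F 1).A,
        IsMCsimp F L A (I.restrictScalars ℂ) D Br 1 φ ∧
        ∀ (i : Fin 2) (hi : i ≠ k),
          LinearMap.lTensor (L.L ⊗[ℂ] A) (pb 0 i).toLinearMap φ = ψ i hi) ∧
    (∀ (n : ℕ) (k : Fin (n + 3))
        (ψ : ∀ i : Fin (n + 3), i ≠ k → (L.L ⊗[ℂ] A) ⊗[ℂ] (F (n + 1)).A),
      (∀ (i : Fin (n + 3)) (hi : i ≠ k),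
        IsMCsimp F L A (I.restrictScalars ℂ) D Br (n + 1) (ψ i hi)) →
      (∀ (i j : Fin (n + 3)) (hi : i ≠ k) (hj : j ≠ k) (hij : i < j),
        LinearMap.lTensor (L.L ⊗[ℂ] A)
            (pb n (i.castPred (Fin.ne_last_of_lt hij))).toLinearMap (ψ j hj) =
          LinearMap.lTensor (L.L ⊗[ℂ] A)
            (pb n (j.pred (Fin.ne_zero_of_lt hij))).toLinearMap (ψ i hi)) →
      ∃ φ : (L.L ⊗[ℂ] A) ⊗[ℂ] (F (n + 2)).A,
        IsMCsimp F L A (I.restrictScalars ℂ) D Br (n + 2) φ ∧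
        ∀ (i : Fin (n + 3)) (hi : i ≠ k),
          LinearMap.lTensor (L.L ⊗[ℂ] A) (pb (n + 1) i).toLinearMap φ = ψ i hi) := by
  obtain rfl : pb = fun k i => (hF (k + 1)).pullback (F k) i.succAbove :=
    funext₂ fun k i => (hpb k i).eq_pullback (hF (k + 1))
  refine ⟨fun k ψ hψ => exists_isMCsimp_of_isHorn hF hI hD hBr hψ ?_, fun n k ψ hψ hface =>
    exists_isMCsimp_of_isHorn hF hI hD hBr hψ (SymmetricSimplicialAddGroup.isHorn_of_face_eq ?_)⟩
  · exact fun _ _ hi hj hij => absurd (by omega) hij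
  · exact fun i j hi hj hij => Subtype.ext (hface i j hi hj hij)

/-- (Hinich–Getzler.)  For a dgLa `L` over ℂ and a local
Artinian ℂ-algebra `A` with maximal ideal `m_A`, the simplicial set
`n ↦ MC(L ⊗ m_A ⊗ A^*(Δ_n))` is a Kan complex: every horn (of dimension 1, or
of dimension `n+2` with the pairwise face compatibilities) of Maurer–Cartan
elements extends to a Maurer–Cartan element on the full simplex. -/
theorem mc_simplicial_kan
    (F : ∀ k, SimplexForms k) (hF : ∀ k, IsPolyDeRham (F k))
    (pb : ∀ (k : ℕ) (i : Fin (k + 2)), (F (k + 1)).A →ₐ[ℂ] (F k).A)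
    (hpb : ∀ (k : ℕ) (i : Fin (k + 2)),
      PullbackProp (F (k + 1)) (F k) (Fin.succAbove i) (pb k i))
    (L : GradedDGLA)
    (A : Type) [CommRing A] [Algebra ℂ A] [IsArtinianRing A] [IsLocalRing A]
    -- the differential of L ⊗ m_A ⊗ A^*(Δ_k)
    (D : ∀ k, (L.L ⊗[ℂ] A) ⊗[ℂ] (F k).A →ₗ[ℂ] (L.L ⊗[ℂ] A) ⊗[ℂ] (F k).A)
    (hD : ∀ (k : ℕ) (p : ℤ) (q : ℕ) (x : L.L) (a : A) (α : (F k).A),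
      x ∈ L.gr p → α ∈ (F k).grading q →
      D k ((x ⊗ₜ a) ⊗ₜ α) =
        ((L.dL x ⊗ₜ a) ⊗ₜ α) + sgn p • ((x ⊗ₜ a) ⊗ₜ ((F k).d α)))
    -- the bracket of L ⊗ m_A ⊗ A^*(Δ_k)
    (Br : ∀ k, (L.L ⊗[ℂ] A) ⊗[ℂ] (F k).A →ₗ[ℂ]
      (L.L ⊗[ℂ] A) ⊗[ℂ] (F k).A →ₗ[ℂ] (L.L ⊗[ℂ] A) ⊗[ℂ] (F k).A)
    (hBr : ∀ (k : ℕ) (p p' : ℤ) (q q' : ℕ) (x y : L.L) (a b : A)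
        (α β : (F k).A), x ∈ L.gr p → y ∈ L.gr p' →
      α ∈ (F k).grading q → β ∈ (F k).grading q' →
      Br k ((x ⊗ₜ a) ⊗ₜ α) ((y ⊗ₜ b) ⊗ₜ β) =
        sgn ((q : ℤ) * p') • ((L.br x y ⊗ₜ (a * b)) ⊗ₜ (α * β))) :
    -- horn filling in dimension 1
    (∀ (k : Fin 2) (ψ : ∀ i : Fin 2, i ≠ k → (L.L ⊗[ℂ] A) ⊗[ℂ] (F 0).A),
      (∀ (i : Fin 2) (hi : i ≠ k),
        IsMCsimp F L A ((IsLocalRing.maximalIdeal A).restrictScalars ℂ) D Br 0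
          (ψ i hi)) →
      ∃ φ : (L.L ⊗[ℂ] A) ⊗[ℂ] (F 1).A,
        IsMCsimp F L A ((IsLocalRing.maximalIdeal A).restrictScalars ℂ) D Br 1 φ ∧
        ∀ (i : Fin 2) (hi : i ≠ k),
          LinearMap.lTensor (L.L ⊗[ℂ] A) (pb 0 i).toLinearMap φ = ψ i hi) ∧
    -- horn filling in dimension n + 2
    (∀ (n : ℕ) (k : Fin (n + 3))
        (ψ : ∀ i : Fin (n + 3), i ≠ k → (L.L ⊗[ℂ] A) ⊗[ℂ] (F (n + 1)).A),
      (∀ (i : Fin (n + 3)) (hi : i ≠ k),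
        IsMCsimp F L A ((IsLocalRing.maximalIdeal A).restrictScalars ℂ) D Br
          (n + 1) (ψ i hi)) →
      (∀ (i j : Fin (n + 3)) (hi : i ≠ k) (hj : j ≠ k) (hij : i.1 < j.1),
        LinearMap.lTensor (L.L ⊗[ℂ] A)
            (pb n ⟨i.1, by have := j.isLt; omega⟩).toLinearMap (ψ j hj) =
          LinearMap.lTensor (L.L ⊗[ℂ] A)
            (pb n ⟨j.1 - 1, by have := j.isLt; omega⟩).toLinearMap (ψ i hi)) →
      ∃ φ : (L.L ⊗[ℂ] A) ⊗[ℂ] (F (n + 2)).A,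
        IsMCsimp F L A ((IsLocalRing.maximalIdeal A).restrictScalars ℂ) D Br
          (n + 2) φ ∧
        ∀ (i : Fin (n + 3)) (hi : i ≠ k),
          LinearMap.lTensor (L.L ⊗[ℂ] A) (pb (n + 1) i).toLinearMap φ = ψ i hi) :=
  mc_simplicial_kan_general F hF pb hpb L A
    ((isArtinianRing_iff_isNilpotent_maximalIdeal A).mp inferInstance) D hD Br hBr
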